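/- arXiv:1709.07485 — 13 statements merged into one kernel-verified Lean document; each statement's English description precedes it below -/
import Mathlib

section
/- Let m, n be positive integers, k ≥ 1 a real number, and V₁ a nonempty subset of D_int. If every point of D_edge is within l1 distance k of some point of V₁, then every point of D_edge is within l1 distance ⌊2k⌋/2 of some point of V₁ (i.e., any set of integer-point stops covering the grid edges with radius k also covers them with the radius rounded down to the nearest integer or half-integer). -/
/-!
Every distance from a grid point or a midpoint of a unit grid edge to an integer point is a
multiple of `1/2`, so at such points being covered with radius `k` is the same as being covered
with radius `K = ⌊2k⌋/2`. It remains to reduce an arbitrary point `p` of a grid edge to one of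
these points `q`, chosen on the same unit edge and such that every stop within `k` of `q` is
within `K` of `p`. If `p` is a grid point, `q = p`. Otherwise, if `K` is an integer, `q` is the
midpoint of the edge: the route from a stop to `q` goes through an endpoint of the edge at integer
distance at most `K - 1/2`, hence at most `K - 1`, so the stop reaches the whole edge. If `K` is
not an integer, `q` is the endpoint nearest to `p`: its distance to the stop is an integer at most
`K`, hence at most `K - 1/2`, and `p` is at most `1/2` away from `q`.

Since the other coordinate of `p` is an integer and is left unchanged, this is a statement about
one real coordinate, `exists_test_point`.
-/

/-- l1 distance on ℝ². -/
noncomputable def dist1 (p q : ℝ × ℝ) : ℝ := |p.1 - q.1| + |p.2 - q.2|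

/-- The rectangle D = [0,n] × [0,m]. -/
def Drect (m n : ℕ) : Set (ℝ × ℝ) :=
  {p | 0 ≤ p.1 ∧ p.1 ≤ (n : ℝ) ∧ 0 ≤ p.2 ∧ p.2 ≤ (m : ℝ)}

/-- The points of D lying on grid lines. -/
def Dedge (m n : ℕ) : Set (ℝ × ℝ) :=
  {p | p ∈ Drect m n ∧ ((∃ z : ℤ, p.1 = (z : ℝ)) ∨ (∃ z : ℤ, p.2 = (z : ℝ)))}

/-- The integer points of D. -/
def Dint (m n : ℕ) : Set (ℝ × ℝ) :=
  {p | p ∈ Drect m n ∧ (∃ a b : ℤ, p = ((a : ℝ), (b : ℝ)))}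

/-- The one-dimensional reduction. Here `x` is the coordinate of `p` along its edge, `y` that of
the test point `q`, `w` the corresponding coordinate of a stop, and `c` the (integer) distance in
the other coordinate. The point is that `y` works for all `w` and `c` simultaneously. -/
lemma exists_test_point (k x : ℝ) :
    ∃ y : ℝ, (⌊x⌋ : ℝ) ≤ y ∧ y ≤ (⌈x⌉ : ℝ) ∧
      ∀ w c : ℤ, |y - w| + c ≤ k → |x - w| + c ≤ (⌊2 * k⌋ : ℝ) / 2 := by
  have hax : (⌊x⌋ : ℝ) ≤ x := Int.floor_le x
  have hxa : x < ⌊x⌋ + 1 := Int.lt_floor_add_one x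
  have hxc : x ≤ (⌈x⌉ : ℝ) := Int.le_ceil x
  have hk : 2 * k < ⌊2 * k⌋ + 1 := Int.lt_floor_add_one _
  rcases eq_or_lt_of_le hax with hx | hx
  · refine ⟨x, hax, hxc, fun w c h => ?_⟩
    rw [← hx] at h ⊢
    have h' : 2 * (|⌊x⌋ - w| + c) ≤ ⌊2 * k⌋ := by
      apply Int.le_floor.mpr
      push_cast
      linarith
    have h'' : (2 : ℝ) * (|(⌊x⌋ : ℝ) - w| + c) ≤ ⌊2 * k⌋ := by exact_mod_cast h'
    linarith
  · have hceil : (⌈x⌉ : ℝ) = ⌊x⌋ + 1 := by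
      have : ⌈x⌉ = ⌊x⌋ + 1 := by
        rw [Int.ceil_eq_iff]
        push_cast
        constructor <;> linarith
      exact_mod_cast this
    rw [hceil]
    generalize ⌊x⌋ = a at *
    generalize ⌊2 * k⌋ = F at *
    -- A stop with coordinate `w` lies on one of the two sides of the unit interval `[a, a + 1]`.
    have side : ∀ w : ℤ, ((w : ℝ) ≤ a) ∨ ((a : ℝ) + 1 ≤ w) := fun w => by
      rcases le_or_gt w a with h | h
      · left; exact_mod_cast h
      · right; exact_mod_cast h
    rcases Int.even_or_odd' F with ⟨N, rfl | rfl⟩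
    · refine ⟨a + 1 / 2, by linarith, by linarith, fun w c h => ?_⟩
      push_cast at hk ⊢
      rcases side w with hw | hw
      · rw [abs_of_nonneg (by linarith)] at h ⊢
        have h1 : a - w + c < N := by
          have : (a : ℝ) - w + c < N := by linarith
          exact_mod_cast this
        have h2 : (a : ℝ) - w + c + 1 ≤ N := by exact_mod_cast h1
        linarith
      · rw [abs_of_nonpos (by linarith)] at h ⊢
        have h1 : w - (a + 1) + c < N := by
          have : (w : ℝ) - (a + 1) + c < N := by linarith
          exact_mod_cast this
        have h2 : (w : ℝ) - (a + 1) + c + 1 ≤ N := by exact_mod_cast h1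
        linarith
    · push_cast at hk ⊢
      -- Both endpoints of the edge are integer points, so the bound there improves from `k` to `N`.
      have key : ∀ b w c : ℤ, |(b : ℝ) - w| + c ≤ k → |(b : ℝ) - w| + c ≤ N := by
        intro b w c h
        have h1 : |b - w| + c < N + 1 := by
          have : |(b : ℝ) - w| + c < N + 1 := by linarith
          exact_mod_cast this
        exact_mod_cast Int.lt_add_one_iff.mp h1
      rcases le_total x (a + 1 / 2) with ht | ht
      · refine ⟨a, le_rfl, by linarith, fun w c h => ?_⟩
        have h1 := key a w c h
        have h2 := abs_sub_le x (a : ℝ) w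
        rw [abs_of_nonneg (by linarith : (0 : ℝ) ≤ x - a)] at h2
        linarith
      · refine ⟨a + 1, by linarith, le_rfl, fun w c h => ?_⟩
        have h1 := key (a + 1) w c (by push_cast; exact h)
        push_cast at h1
        have h2 := abs_sub_le x ((a : ℝ) + 1) w
        rw [abs_of_nonpos (by linarith : x - ((a : ℝ) + 1) ≤ 0)] at h2
        linarith

/-- The test point stays inside the rectangle, because its sides have integer length. -/
lemma test_point_mem {x y : ℝ} {n : ℕ} (h0 : 0 ≤ x) (hn : x ≤ n)
    (hy : (⌊x⌋ : ℝ) ≤ y) (hy' : y ≤ (⌈x⌉ : ℝ)) : 0 ≤ y ∧ y ≤ n := by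
  have h1 : (0 : ℝ) ≤ ⌊x⌋ := by exact_mod_cast Int.floor_nonneg.mpr h0
  have h2 : (⌈x⌉ : ℝ) ≤ n := by
    have : ⌈x⌉ ≤ (n : ℤ) := Int.ceil_le.mpr (by exact_mod_cast hn)
    exact_mod_cast this
  exact ⟨h1.trans hy, hy'.trans h2⟩

theorem stmt_0 (m n : ℕ) (hm : 0 < m) (hn : 0 < n) (hmn : n ≤ m)
    (k : ℝ) (hk : 1 ≤ k)
    (V₁ : Set (ℝ × ℝ)) (hV₁ : V₁ ⊆ Dint m n) (hne : V₁.Nonempty)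
    (hcov : ∀ p ∈ Dedge m n, ∃ v ∈ V₁, dist1 p v ≤ k) :
    ∀ p ∈ Dedge m n, ∃ v ∈ V₁, dist1 p v ≤ (⌊2 * k⌋ : ℝ) / 2 := by
  rintro ⟨p1, p2⟩ ⟨⟨h1, h2, h3, h4⟩, ⟨z, hz⟩ | ⟨z, hz⟩⟩
  · obtain ⟨y, hy, hy', H⟩ := exists_test_point k p2
    obtain ⟨hy0, hym⟩ := test_point_mem h3 h4 hy hy'
    obtain ⟨v, hv, hd⟩ := hcov (p1, y) ⟨⟨h1, h2, hy0, hym⟩, Or.inl ⟨z, hz⟩⟩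
    refine ⟨v, hv, ?_⟩
    obtain ⟨-, a, b, rfl⟩ := hV₁ hv
    have := H b |z - a|
    simp only [dist1] at hd hz ⊢
    subst hz
    push_cast at this
    rw [add_comm] at hd ⊢
    exact this hd
  · obtain ⟨y, hy, hy', H⟩ := exists_test_point k p1
    obtain ⟨hy0, hyn⟩ := test_point_mem h1 h2 hy hy'
    obtain ⟨v, hv, hd⟩ := hcov (y, p2) ⟨⟨hy0, hyn, h3, h4⟩, Or.inr ⟨z, hz⟩⟩
    refine ⟨v, hv, ?_⟩
    obtain ⟨-, a, b, rfl⟩ := hV₁ hv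
    have := H a |z - b|
    simp only [dist1] at hd hz ⊢
    subst hz
    push_cast at this
    exact this hd
end

section
/- Let m, n be positive integers, k a positive integer, and V₁ a nonempty subset of D_int. Then every point of D_edge is within l1 distance k of some point of V₁ if and only if every point of the full rectangle D is within l1 distance k of some point of V₁. -/
/-- If the midpoint of the segment from `(a, e)` to `(a + 1, e)` is within `k` of the integer
point `(c, d)`, then `(c, d)` covers the unit ball around one of the two endpoints, in the part of
the plane where `a ≤ x ≤ a + 1`. -/
lemma cover_of_midpoint (a e c d : ℤ) (k : ℕ) (x y : ℝ) (h₀ : (a : ℝ) ≤ x) (h₁ : x ≤ a + 1)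
    (h : |(a : ℝ) + 1 / 2 - c| + |(e : ℝ) - d| ≤ k) :
    ((x - a) + |y - e| ≤ 1 → |x - c| + |y - d| ≤ k) ∨
      ((a + 1 - x) + |y - e| ≤ 1 → |x - c| + |y - d| ≤ k) := by
  have htri : |y - d| ≤ |y - e| + |(e : ℝ) - d| := abs_sub_le _ _ _
  rcases le_or_gt c a with hc | hc
  · left
    intro hp
    have hc' : (c : ℝ) ≤ a := by exact_mod_cast hc
    rw [abs_of_nonneg (by linarith)] at h
    -- integrality improves `k - 1/2` to `k - 1`
    have hlt : a - c + |e - d| < (k : ℤ) := by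
      have : (a : ℝ) - c + |(e : ℝ) - d| < k := by linarith
      exact_mod_cast this
    have hle : (a : ℝ) - c + |(e : ℝ) - d| + 1 ≤ k := by exact_mod_cast hlt
    rw [abs_of_nonneg (by linarith : (0 : ℝ) ≤ x - c)]
    linarith
  · right
    intro hp
    have hc' : (a : ℝ) + 1 ≤ c := by exact_mod_cast hc
    rw [abs_of_nonpos (by linarith)] at h
    have hlt : c - (a + 1) + |e - d| < (k : ℤ) := by
      have : (c : ℝ) - (a + 1) + |(e : ℝ) - d| < k := by linarith
      exact_mod_cast this
    have hle : (c : ℝ) - (a + 1) + |(e : ℝ) - d| + 1 ≤ k := by exact_mod_cast hlt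
    rw [abs_of_nonpos (by linarith : x - c ≤ (0 : ℝ))]
    linarith

theorem stmt_1 (m n : ℕ) (hm : 0 < m) (hn : 0 < n) (hmn : n ≤ m)
    (k : ℕ) (hk : 0 < k)
    (V₁ : Set (ℝ × ℝ)) (hV₁ : V₁ ⊆ Dint m n) (hne : V₁.Nonempty) :
    (∀ p ∈ Dedge m n, ∃ v ∈ V₁, dist1 p v ≤ (k : ℝ)) ↔
      (∀ p ∈ Drect m n, ∃ v ∈ V₁, dist1 p v ≤ (k : ℝ)) := by
  refine ⟨fun H p hp => ?_, fun H p hp => H p hp.1⟩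
  by_cases hpe : p ∈ Dedge m n
  · exact H p hpe
  obtain ⟨x, y⟩ := p
  obtain ⟨hx0, hxn, hy0, hym⟩ := id hp
  dsimp only at hx0 hxn hy0 hym
  obtain ⟨a, ha⟩ : ∃ a, a = ⌊x⌋ := ⟨_, rfl⟩
  obtain ⟨b, hb⟩ : ∃ b, b = ⌊y⌋ := ⟨_, rfl⟩
  have hax : (a : ℝ) ≤ x := ha ▸ Int.floor_le x
  have hxa : x < a + 1 := ha ▸ Int.lt_floor_add_one x
  have hby : (b : ℝ) ≤ y := hb ▸ Int.floor_le y
  have hyb : y < b + 1 := hb ▸ Int.lt_floor_add_one y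
  have ha0 : (0 : ℝ) ≤ a := by exact_mod_cast ha ▸ Int.floor_nonneg.2 hx0
  have hb0 : (0 : ℝ) ≤ b := by exact_mod_cast hb ▸ Int.floor_nonneg.2 hy0
  -- the closed cell stays inside `D` because `x` and `y` are not integers
  have han : (a : ℝ) + 1 ≤ n := by
    have h1 : (a : ℝ) < n :=
      lt_of_le_of_ne (hax.trans hxn) fun h => hpe ⟨hp, Or.inl ⟨a, by dsimp only; linarith⟩⟩
    have h2 : a < (n : ℤ) := by exact_mod_cast h1
    exact_mod_cast h2
  have hbm : (b : ℝ) + 1 ≤ m := by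
    have h1 : (b : ℝ) < m :=
      lt_of_le_of_ne (hby.trans hym) fun h => hpe ⟨hp, Or.inr ⟨b, by dsimp only; linarith⟩⟩
    have h2 : b < (m : ℤ) := by exact_mod_cast h1
    exact_mod_cast h2
  have horiz : ∀ e : ℤ, (0 : ℝ) ≤ e → (e : ℝ) ≤ m →
      ((x - a) + |y - e| ≤ 1 → ∃ v ∈ V₁, dist1 (x, y) v ≤ (k : ℝ)) ∨
        ((a + 1 - x) + |y - e| ≤ 1 → ∃ v ∈ V₁, dist1 (x, y) v ≤ (k : ℝ)) := by
    intro e he0 hem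
    obtain ⟨v, hv, hd⟩ := H ((a : ℝ) + 1 / 2, (e : ℝ))
      ⟨⟨by dsimp only; linarith, by dsimp only; linarith, he0, hem⟩, Or.inr ⟨e, rfl⟩⟩
    obtain ⟨-, c, d, rfl⟩ := hV₁ hv
    exact (cover_of_midpoint a e c d k x y hax hxa.le hd).imp
      (fun h h' => ⟨_, hv, h h'⟩) (fun h h' => ⟨_, hv, h h'⟩)
  have vert : ∀ e : ℤ, (0 : ℝ) ≤ e → (e : ℝ) ≤ n →
      ((y - b) + |x - e| ≤ 1 → ∃ v ∈ V₁, dist1 (x, y) v ≤ (k : ℝ)) ∨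
        ((b + 1 - y) + |x - e| ≤ 1 → ∃ v ∈ V₁, dist1 (x, y) v ≤ (k : ℝ)) := by
    intro e he0 hen
    obtain ⟨v, hv, hd⟩ := H ((e : ℝ), (b : ℝ) + 1 / 2)
      ⟨⟨he0, hen, by dsimp only; linarith, by dsimp only; linarith⟩, Or.inl ⟨e, rfl⟩⟩
    obtain ⟨-, c, d, rfl⟩ := hV₁ hv
    exact (cover_of_midpoint b e d c k y x hby hyb.le ((add_comm _ _).trans_le hd)).imp
      (fun h h' => ⟨_, hv, (add_comm _ _).trans_le (h h')⟩)
      (fun h h' => ⟨_, hv, (add_comm _ _).trans_le (h h')⟩)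
  have hB := horiz b hb0 (by linarith)
  have hT := horiz (b + 1) (by push_cast; linarith) (by push_cast; linarith)
  have hL := vert a ha0 (by linarith)
  have hR := vert (a + 1) (by push_cast; linarith) (by push_cast; linarith)
  push_cast at hT hR
  rw [abs_of_nonneg (by linarith)] at hB hL
  rw [abs_of_nonpos (by linarith)] at hT hR
  by_contra hno
  simp only [hno, imp_false, not_le] at hB hT hL hR
  -- otherwise two opposite half-cells would both miss `p`, although they fill the cell
  rcases hB with hB | hB <;> rcases hT with hT | hT <;> rcases hL with hL | hL <;>
    rcases hR with hR | hR <;> linarith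
end

section
/- Let m, n be positive integers, let k = t + 1/2 where t is a positive integer (so k is a half-integer that is not an integer), and let V₁ be a nonempty subset of D_int. Then every point of D_edge is within l1 distance k of some point of V₁ if and only if every point of D_int is within l1 distance k − 1/2 of some point of V₁. -/
theorem dist1_triangle (p q r : ℝ × ℝ) : dist1 p r ≤ dist1 p q + dist1 q r := by
  unfold dist1
  linarith [abs_sub_le p.1 q.1 r.1, abs_sub_le p.2 q.2 r.2]

theorem round_mem_of_mem {x : ℝ} {N : ℕ} (h0 : 0 ≤ x) (hN : x ≤ N) :
    (0 : ℝ) ≤ round x ∧ (round x : ℝ) ≤ N := by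
  obtain ⟨h1, h2⟩ := abs_le.mp (abs_sub_round x)
  have h3 : (-1 : ℤ) < round x := by
    have : ((-1 : ℤ) : ℝ) < round x := by push_cast; linarith
    exact_mod_cast this
  have h4 : round x < (N : ℤ) + 1 := by
    have : (round x : ℝ) < (((N : ℤ) + 1 : ℤ) : ℝ) := by push_cast; linarith
    exact_mod_cast this
  constructor
  · exact_mod_cast (by omega : (0 : ℤ) ≤ round x)
  · exact_mod_cast (by omega : round x ≤ (N : ℤ))

theorem exists_Dint_near {m n : ℕ} {p : ℝ × ℝ} (hp : p ∈ Dedge m n) :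
    ∃ q ∈ Dint m n, dist1 p q ≤ 1 / 2 := by
  obtain ⟨⟨hx0, hxn, hy0, hym⟩, hz⟩ := hp
  obtain ⟨h1, h2⟩ := round_mem_of_mem hx0 hxn
  obtain ⟨h3, h4⟩ := round_mem_of_mem hy0 hym
  -- An integer coordinate is fixed by `round`, so rounding both coordinates treats both cases.
  refine ⟨((round p.1 : ℝ), (round p.2 : ℝ)), ⟨⟨h1, h2, h3, h4⟩, _, _, rfl⟩, ?_⟩
  have hx := abs_sub_round p.1
  have hy := abs_sub_round p.2
  unfold dist1
  rcases hz with ⟨z, hz⟩ | ⟨z, hz⟩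
  · have h0 : |p.1 - round p.1| = 0 := by simp [hz]
    simp only [h0]
    linarith
  · have h0 : |p.2 - round p.2| = 0 := by simp [hz]
    simp only [h0]
    linarith

theorem stmt_2 (m n : ℕ) (hm : 0 < m) (hn : 0 < n) (hmn : n ≤ m)
    (t : ℕ) (ht : 0 < t) (k : ℝ) (hk : k = (t : ℝ) + 1/2)
    (V₁ : Set (ℝ × ℝ)) (hV₁ : V₁ ⊆ Dint m n) (hne : V₁.Nonempty) :
    (∀ p ∈ Dedge m n, ∃ v ∈ V₁, dist1 p v ≤ k) ↔
      (∀ p ∈ Dint m n, ∃ v ∈ V₁, dist1 p v ≤ k - 1/2) := by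
  subst hk
  constructor
  · intro h p hp
    obtain ⟨v, hv, hd⟩ := h p ⟨hp.1, by obtain ⟨-, a, b, rfl⟩ := hp; exact Or.inl ⟨a, rfl⟩⟩
    refine ⟨v, hv, ?_⟩
    obtain ⟨-, a, b, rfl⟩ := hp
    obtain ⟨-, c, d, rfl⟩ := hV₁ hv
    have he : dist1 ((a : ℝ), (b : ℝ)) ((c : ℝ), (d : ℝ)) = ((|a - c| + |b - d| : ℤ) : ℝ) := by
      simp [dist1]
    rw [he] at hd ⊢
    have hlt : |a - c| + |b - d| < (t : ℤ) + 1 := by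
      have : ((|a - c| + |b - d| : ℤ) : ℝ) < (((t : ℤ) + 1 : ℤ) : ℝ) := by
        rw [Int.cast_add (t : ℤ) 1, Int.cast_natCast, Int.cast_one]
        linarith
      exact_mod_cast this
    have hle : ((|a - c| + |b - d| : ℤ) : ℝ) ≤ ((t : ℤ) : ℝ) :=
      Int.cast_le.mpr (Int.lt_add_one_iff.mp hlt)
    rw [Int.cast_natCast] at hle
    linarith
  · intro h p hp
    obtain ⟨q, hq, hpq⟩ := exists_Dint_near hp
    obtain ⟨v, hv, hd⟩ := h q hq
    exact ⟨v, hv, by linarith [dist1_triangle p q v]⟩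
end

section
/- For every real k > 0 and all reals p, q, the two-dimensional Lebesgue measure of B((0,0),k) ∩ B((|p|+|q|, 0), k) is at most the two-dimensional Lebesgue measure of B((0,0),k) ∩ B((p,q),k). (Moving a second diamond of the same radius to lie on a coordinate axis at the same l1 distance from the origin can only decrease the overlap with the diamond centered at the origin.) -/
/-!
Put `s = |p| + |q|`. The overlap of the origin's diamond with its translate by `(s, 0)` lies in the
diamond of radius `k - s / 2` about the midpoint `(s / 2, 0)`. By the triangle inequality, the
diamond of the same radius about the midpoint `(p / 2, q / 2)` lies in the overlap with the
translate by `(p, q)`. These two small diamonds are translates of each other, so they have equal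
area.
-/

open MeasureTheory

/-- The closed l1 ball (diamond) of radius k centered at c. -/
def l1Ball (c : ℝ × ℝ) (k : ℝ) : Set (ℝ × ℝ) := {z | dist1 z c ≤ k}

theorem volume_l1Ball_eq (c d : ℝ × ℝ) (r : ℝ) :
    volume (l1Ball c r) = volume (l1Ball d r) := by
  have h : l1Ball c r = (fun z => z + (d - c)) ⁻¹' l1Ball d r := by
    ext z
    simp only [l1Ball, dist1, Set.mem_preimage, Set.mem_ofPred_eq, Prod.fst_add, Prod.snd_add,
      Prod.fst_sub, Prod.snd_sub]
    ring_nf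
  rw [h, measure_preimage_add_right]

theorem overlap_axis_subset (k s : ℝ) :
    l1Ball (0, 0) k ∩ l1Ball (s, 0) k ⊆ l1Ball (s / 2, 0) (k - s / 2) := by
  rintro ⟨x, y⟩ ⟨h₁, h₂⟩
  simp only [l1Ball, dist1, Set.mem_ofPred_eq, sub_zero] at *
  rcases abs_cases (x - s / 2) with h | h <;>
    linarith [le_abs_self x, neg_abs_le (x - s)]

theorem midpoint_l1Ball_subset (k p q : ℝ) :
    l1Ball (p / 2, q / 2) (k - (|p| + |q|) / 2) ⊆ l1Ball (0, 0) k ∩ l1Ball (p, q) k := by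
  rintro ⟨x, y⟩ h
  simp only [l1Ball, dist1, Set.mem_inter_iff, Set.mem_ofPred_eq, sub_zero] at *
  have key (a t : ℝ) : |t| ≤ |t - a / 2| + |a| / 2 ∧ |t - a| ≤ |t - a / 2| + |a| / 2 := by
    constructor <;> grind
  constructor <;> linarith [key p x, key q y]

theorem stmt_3 (k : ℝ) (hk : 0 < k) (p q : ℝ) :
    volume (l1Ball (0, 0) k ∩ l1Ball ((|p| + |q|, 0)) k) ≤
      volume (l1Ball (0, 0) k ∩ l1Ball ((p, q)) k) :=
  (measure_mono (overlap_axis_subset k _)).trans <|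
    (volume_l1Ball_eq _ (p / 2, q / 2) _).trans_le <|
      measure_mono (midpoint_l1Ball_subset k p q)
end

section
/- For every real k > 0 and all reals p ≥ q ≥ 0, one has the set inclusion B((0,0),k) ∩ B((p+q, 0), k) ⊆ B((0,0),k) ∩ B((p,q),k). -/
theorem stmt_4 (k : ℝ) (hk : 0 < k) (p q : ℝ) (hq : 0 ≤ q) (hpq : q ≤ p) :
    l1Ball (0, 0) k ∩ l1Ball ((p + q, 0)) k ⊆ l1Ball (0, 0) k ∩ l1Ball ((p, q)) k := by
  rintro ⟨x, y⟩ ⟨h0, h1⟩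
  refine ⟨h0, ?_⟩
  simp only [l1Ball, dist1, Set.mem_ofPred_eq, sub_zero] at h0 h1 ⊢
  have hy : |y - q| ≤ |y| + q := by
    simpa [abs_of_nonneg hq] using abs_sub y q
  -- Left of `p` the ball about `(p + q, 0)` gives the bound; right of `p` the ball about the
  -- origin does, and this is where `q ≤ p` enters.
  rcases le_total x p with h | h
  · rw [abs_of_nonpos (sub_nonpos.2 h)]
    linarith [neg_abs_le (x - (p + q))]
  · rw [abs_of_nonneg (sub_nonneg.2 h)]
    linarith [le_abs_self x]
end

section
/- Trade-off constraint for the RC-CPPG: let m ≥ n > 0 be reals, k > 0, and let T ≥ 2 be an integer. Suppose F(1), …, F(T) are points of ℝ² such that every point of the rectangle [0,n] × [0,m] is within l1 distance k of some F(i), and let L = ∑_{i=1}^{T−1} dist₁(F(i), F(i+1)) be the path length. Then (T−1)·f(L/(T−1)) ≥ mn − 2k². -/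
/-!
The rectangle has area `m * n` and is contained in the union of the `l1` balls `B i` of radius `k`
around the stops, so `m * n ≤ area (B 1) + ∑ area (B (i + 1) \ B i)` (`volume_iUnion_ball_le`).
The first ball has area `2 * k ^ 2`. In the coordinates `(x + y, x - y)`, which double areas, the
`l1` balls become axis-parallel squares of side `2 * k`; if two centres are at `l1` distance `d`,
both coordinates of their displacement are at most `d`, so the squares share an area of at least
`(max 0 (2 * k - d)) ^ 2`, and a new ball contributes at most
`2 * k ^ 2 - (max 0 (2 * k - d)) ^ 2 / 2 = tradeoffF k d` (`volume_ball_diff_le`). Finally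
`tradeoffF k` is concave, in the form of the tangent-line bound `tradeoffF_le_tangent`, so the sum
of its values at the step lengths is at most `T - 1` times its value at their mean.
-/

open Finset

/-- The function f from the trade-off constraint:
`f d = d(2k − d/2)` for `0 ≤ d ≤ 2k` and `f d = 2k²` for `d > 2k`. -/
noncomputable def tradeoffF (k d : ℝ) : ℝ :=
  if d ≤ 2 * k then d * (2 * k - d / 2) else 2 * k ^ 2

open MeasureTheory

/-- The linear map `(x, y) ↦ (x + y, x - y)`, taking `l1` balls to axis-parallel squares. -/
noncomputable def diagMap : ℝ × ℝ →ₗ[ℝ] ℝ × ℝ :=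
  Matrix.toLin (Module.Basis.finTwoProd ℝ) (Module.Basis.finTwoProd ℝ) !![1, 1; 1, -1]

theorem diagMap_apply (p : ℝ × ℝ) : diagMap p = (p.1 + p.2, p.1 - p.2) := by
  simp [diagMap, Matrix.toLin_finTwoProd_apply, sub_eq_add_neg]

theorem det_diagMap : LinearMap.det diagMap = -2 := by
  rw [diagMap, LinearMap.det_toLin, Matrix.det_fin_two_of]
  norm_num

theorem volume_diagMap_preimage (s : Set (ℝ × ℝ)) :
    volume (diagMap ⁻¹' s) = ENNReal.ofReal (1 / 2) * volume s := by
  rw [Measure.addHaar_preimage_linearMap _ (by rw [det_diagMap]; norm_num), det_diagMap]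
  norm_num [abs_of_pos]

/-- The axis-parallel closed square of side `2 * k` centred at `c`. -/
def diagSquare (k : ℝ) (c : ℝ × ℝ) : Set (ℝ × ℝ) :=
  Set.Icc (c.1 - k) (c.1 + k) ×ˢ Set.Icc (c.2 - k) (c.2 + k)

theorem dist1_eq_max (p q : ℝ × ℝ) :
    dist1 p q = max |(diagMap p).1 - (diagMap q).1| |(diagMap p).2 - (diagMap q).2| := by
  simp only [diagMap_apply, dist1]
  grind

theorem ball_eq_preimage (k : ℝ) (q : ℝ × ℝ) :
    {p | dist1 p q ≤ k} = diagMap ⁻¹' diagSquare k (diagMap q) := by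
  ext p
  simp only [Set.mem_ofPred_eq, dist1_eq_max, diagSquare, Set.mem_preimage, Set.mem_prod,
    Set.mem_Icc, max_le_iff, abs_le]
  constructor
  · rintro ⟨⟨_, _⟩, _, _⟩
    refine ⟨⟨?_, ?_⟩, ?_, ?_⟩ <;> linarith
  · rintro ⟨⟨_, _⟩, _, _⟩
    refine ⟨⟨?_, ?_⟩, ?_, ?_⟩ <;> linarith

theorem volume_diagSquare {k : ℝ} (hk : 0 < k) (c : ℝ × ℝ) :
    volume (diagSquare k c) = ENNReal.ofReal (4 * k ^ 2) := by
  rw [diagSquare, Measure.volume_eq_prod, Measure.prod_prod, Real.volume_Icc, Real.volume_Icc,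
    ← ENNReal.ofReal_mul (by linarith)]
  congr 1
  ring

theorem measurableSet_diagSquare (k : ℝ) (c : ℝ × ℝ) : MeasurableSet (diagSquare k c) :=
  measurableSet_Icc.prod measurableSet_Icc

/-- Two intervals of length `2 * k` whose centres are at most `d` apart overlap in length at least
`2 * k - d`. -/
theorem le_volume_Icc_inter {k d a b : ℝ} (hd : 0 ≤ d) (h : |a - b| ≤ d) :
    ENNReal.ofReal (max 0 (2 * k - d)) ≤
      volume (Set.Icc (a - k) (a + k) ∩ Set.Icc (b - k) (b + k)) := by
  rw [Set.Icc_inter_Icc, Real.volume_Icc, ENNReal.ofReal_max]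
  simp only [ENNReal.ofReal_zero, zero_le, sup_of_le_right]
  apply ENNReal.ofReal_le_ofReal
  grind

/-- A closed form valid on both branches, in which concavity in `d` is visible. -/
theorem tradeoffF_eq {k d : ℝ} :
    tradeoffF k d = 2 * k ^ 2 - (max 0 (2 * k - d)) ^ 2 / 2 := by
  unfold tradeoffF
  split_ifs with h
  · rw [max_eq_right (by linarith)]; ring
  · rw [max_eq_left (by linarith)]; ring

theorem tradeoffF_nonneg {k d : ℝ} (hk : 0 < k) (hd : 0 ≤ d) : 0 ≤ tradeoffF k d := by
  unfold tradeoffF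
  split_ifs with h
  · exact mul_nonneg hd (by linarith)
  · positivity

/-- Concavity of `tradeoffF k`: its graph lies below the tangent line at `a`, whose slope is
`max 0 (2 * k - a)`. -/
theorem tradeoffF_le_tangent (k a d : ℝ) :
    tradeoffF k d ≤ tradeoffF k a + max 0 (2 * k - a) * (d - a) := by
  rw [tradeoffF_eq, tradeoffF_eq]
  have ht : 2 * k - d ≤ max 0 (2 * k - d) := le_max_right _ _
  generalize max 0 (2 * k - d) = t at ht
  rcases max_choice 0 (2 * k - a) with h | h
  · rw [h]; nlinarith [sq_nonneg t]
  · have hs : 0 ≤ 2 * k - a := by rw [← h]; exact le_max_left _ _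
    rw [h]
    nlinarith [sq_nonneg (t - (2 * k - a)), mul_le_mul_of_nonneg_left ht hs]

/-- The area newly covered by moving the centre of a ball from `p` to `q`. -/
theorem volume_ball_diff_le {k : ℝ} (hk : 0 < k) (p q : ℝ × ℝ) :
    volume ({x | dist1 x q ≤ k} \ {x | dist1 x p ≤ k}) ≤
      ENNReal.ofReal (tradeoffF k (dist1 p q)) := by
  have hd : 0 ≤ dist1 p q := add_nonneg (abs_nonneg _) (abs_nonneg _)
  have h := dist1_eq_max q p
  have hsymm : dist1 q p = dist1 p q := by simp only [dist1, abs_sub_comm]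
  rw [hsymm] at h
  rw [ball_eq_preimage, ball_eq_preimage, ← Set.preimage_sdiff, volume_diagMap_preimage]
  generalize diagMap p = u, diagMap q = v at *
  generalize dist1 p q = d at *
  have hinter : ENNReal.ofReal ((max 0 (2 * k - d)) ^ 2) ≤
      volume (diagSquare k v ∩ diagSquare k u) := by
    rw [diagSquare, diagSquare, Set.prod_inter_prod, Measure.volume_eq_prod, Measure.prod_prod,
      pow_two, ENNReal.ofReal_mul (le_max_left _ _)]
    exact mul_le_mul' (le_volume_Icc_inter hd (h ▸ le_max_left _ _))
      (le_volume_Icc_inter hd (h ▸ le_max_right _ _))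
  have hdiff : volume (diagSquare k v \ diagSquare k u) ≤
      ENNReal.ofReal (4 * k ^ 2 - (max 0 (2 * k - d)) ^ 2) := by
    rw [← Set.sdiff_self_inter, measure_sdiff Set.inter_subset_left
      ((measurableSet_diagSquare k v).inter (measurableSet_diagSquare k u)).nullMeasurableSet
      (measure_ne_top_of_subset Set.inter_subset_left
        (by rw [volume_diagSquare hk]; exact ENNReal.ofReal_ne_top)),
      volume_diagSquare hk, ENNReal.ofReal_sub _ (sq_nonneg _)]
    exact tsub_le_tsub_left hinter _
  calc _ ≤ ENNReal.ofReal (1 / 2) * ENNReal.ofReal (4 * k ^ 2 - (max 0 (2 * k - d)) ^ 2) := by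
        gcongr
    _ = _ := by
        rw [← ENNReal.ofReal_mul (by norm_num), tradeoffF_eq]
        congr 1
        ring

/-- The area covered by the first `N + 1` stops. -/
theorem volume_iUnion_ball_le {k : ℝ} (hk : 0 < k) (F : ℕ → ℝ × ℝ) (N : ℕ) :
    volume (⋃ i ∈ Finset.Icc 1 (N + 1), {x | dist1 x (F i) ≤ k}) ≤
      ENNReal.ofReal (2 * k ^ 2 +
        ∑ i ∈ Finset.Ico 1 (N + 1), tradeoffF k (dist1 (F i) (F (i + 1)))) := by
  have hnn : ∀ i, 0 ≤ tradeoffF k (dist1 (F i) (F (i + 1))) := fun i =>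
    tradeoffF_nonneg hk (add_nonneg (abs_nonneg _) (abs_nonneg _))
  induction N with
  | zero =>
    simp only [zero_add, Finset.Icc_self, Finset.mem_singleton, Set.iUnion_iUnion_eq_left,
      Finset.Ico_self, Finset.sum_empty, add_zero]
    rw [ball_eq_preimage, volume_diagMap_preimage, volume_diagSquare hk,
      ← ENNReal.ofReal_mul (by norm_num)]
    exact ENNReal.ofReal_le_ofReal (by linarith)
  | succ N ih =>
    rw [Finset.sum_Ico_succ_top (by omega), ← add_assoc, ENNReal.ofReal_add
      (add_nonneg (by positivity) (Finset.sum_nonneg fun i _ => hnn i)) (hnn _)]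
    refine le_trans (measure_mono ?_) ((measure_union_le _ _).trans
      (add_le_add ih (volume_ball_diff_le hk (F (N + 1)) (F (N + 1 + 1)))))
    intro x hx
    simp only [Set.mem_iUnion, Finset.mem_Icc, Set.mem_union, Set.mem_sdiff, Set.mem_ofPred_eq,
      exists_prop] at hx ⊢
    obtain ⟨i, ⟨hi1, hi2⟩, hi⟩ := hx
    by_cases hN : dist1 x (F (N + 1)) ≤ k
    · exact Or.inl ⟨N + 1, ⟨by omega, le_rfl⟩, hN⟩
    · rcases hi2.lt_or_eq with h | rfl
      · exact Or.inl ⟨i, ⟨hi1, by omega⟩, hi⟩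
      · exact Or.inr ⟨hi, hN⟩

theorem stmt_5 (m n k : ℝ) (hn : 0 < n) (hmn : n ≤ m) (hk : 0 < k)
    (T : ℕ) (hT : 2 ≤ T) (F : ℕ → ℝ × ℝ)
    (hcov : ∀ p : ℝ × ℝ, 0 ≤ p.1 → p.1 ≤ n → 0 ≤ p.2 → p.2 ≤ m →
      ∃ i ∈ Finset.Icc 1 T, dist1 p (F i) ≤ k)
    (L : ℝ) (hL : L = ∑ i ∈ Finset.Ico 1 T, dist1 (F i) (F (i + 1))) :
    (T - 1 : ℝ) * tradeoffF k (L / (T - 1 : ℝ)) ≥ m * n - 2 * k ^ 2 := by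
  obtain ⟨N, rfl⟩ : ∃ N, T = N + 1 := ⟨T - 1, by omega⟩
  have hN : (0 : ℝ) < N := by exact_mod_cast (by omega : 0 < N)
  have hT1 : ((N + 1 : ℕ) : ℝ) - 1 = N := by push_cast; ring
  rw [hT1]
  have hrect : ENNReal.ofReal (m * n) ≤
      volume (⋃ i ∈ Finset.Icc 1 (N + 1), {x | dist1 x (F i) ≤ k}) := by
    have hv : volume (Set.Icc (0 : ℝ) n ×ˢ Set.Icc (0 : ℝ) m) = ENNReal.ofReal (m * n) := by
      rw [Measure.volume_eq_prod, Measure.prod_prod, Real.volume_Icc, Real.volume_Icc,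
        ← ENNReal.ofReal_mul (by linarith)]
      congr 1
      ring
    rw [← hv]
    refine measure_mono ?_
    rintro p ⟨⟨h1, h2⟩, h3, h4⟩
    simpa only [Set.mem_iUnion, exists_prop, Set.mem_ofPred_eq] using hcov p h1 h2 h3 h4
  have hnn : 0 ≤ ∑ i ∈ Finset.Ico 1 (N + 1), tradeoffF k (dist1 (F i) (F (i + 1))) :=
    Finset.sum_nonneg fun i _ =>
      tradeoffF_nonneg hk (add_nonneg (abs_nonneg _) (abs_nonneg _))
  have harea := (ENNReal.ofReal_le_ofReal_iff (by positivity)).1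
    (hrect.trans (volume_iUnion_ball_le hk F N))
  have hsum : ∑ i ∈ Finset.Ico 1 (N + 1), tradeoffF k (dist1 (F i) (F (i + 1))) ≤
      ∑ i ∈ Finset.Ico 1 (N + 1), (tradeoffF k (L / N) +
        max 0 (2 * k - L / N) * (dist1 (F i) (F (i + 1)) - L / N)) :=
    Finset.sum_le_sum fun i _ => tradeoffF_le_tangent k _ _
  -- The linear terms cancel, the tangent being taken at the mean step length.
  rw [Finset.sum_add_distrib, ← Finset.mul_sum, Finset.sum_sub_distrib, ← hL] at hsum
  simp only [Finset.sum_const, Nat.card_Ico, Nat.add_sub_cancel, nsmul_eq_mul,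
    mul_div_cancel₀ L hN.ne', sub_self, mul_zero, add_zero] at hsum
  linarith
end

section
/- Feasibility of the up-and-down path: let m ≥ n > 0 be reals, k > 0, d ∈ (0, 2k], and r = 2k − d/2. For each integer i ≥ 0 with i·r ≤ n + r let x_i = min(i·r, n), and define the stop set S ⊆ ℝ² as follows: for even i, S contains the points (x_i, j·d) for all integers j ≥ 0 with j·d ≤ m, together with (x_i, m); for odd i, S contains the points (x_i, j·d + d/2) for all integers j ≥ 0 with j·d + d/2 ≤ m, together with (x_i, m). Then every point of the rectangle [0,n] × [0,m] is within l1 distance k of some point of S. -/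
/-- The stop set of a type-`d` up-and-down path on the rectangle `[0,n] × [0,m]`,
where `r = 2k − d/2`: traversals are at abscissas `x_i = min(i·r, n)` for integers
`i ≥ 0` with `i·r ≤ n + r`; even traversals carry stops at heights `j·d` (for
`j·d ≤ m`) together with a stop at height `m`, and odd traversals carry stops at
heights `j·d + d/2` (for `j·d + d/2 ≤ m`) together with a stop at height `m`. -/
def upDownStops (m n d r : ℝ) : Set (ℝ × ℝ) :=
  {p | ∃ i : ℕ, (i : ℝ) * r ≤ n + r ∧
        ((Even i ∧
            ((∃ j : ℕ, (j : ℝ) * d ≤ m ∧ p = (min ((i : ℝ) * r) n, (j : ℝ) * d)) ∨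
              p = (min ((i : ℝ) * r) n, m))) ∨
          (Odd i ∧
            ((∃ j : ℕ, (j : ℝ) * d + d / 2 ≤ m ∧
                p = (min ((i : ℝ) * r) n, (j : ℝ) * d + d / 2)) ∨
              p = (min ((i : ℝ) * r) n, m))))}

/-- Uniform description of the stops in units of `d / 2`; the truncation at `m` covers the extra
stop at the top of each traversal. -/
lemma mem_upDownStops_of_parity {m n d r : ℝ} {i h : ℕ} (hi : (i : ℝ) * r ≤ n + r)
    (hpar : Even i ↔ Even h) :
    (min ((i : ℝ) * r) n, min ((h : ℝ) * (d / 2)) m) ∈ upDownStops m n d r := by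
  refine ⟨i, hi, ?_⟩
  rcases Nat.even_or_odd i with he | ho
  · refine Or.inl ⟨he, ?_⟩
    rcases le_total ((h : ℝ) * (d / 2)) m with hm | hm
    · obtain ⟨j, rfl⟩ := hpar.1 he
      have e : ((j + j : ℕ) : ℝ) * (d / 2) = j * d := by push_cast; ring
      rw [e] at hm ⊢
      exact Or.inl ⟨j, hm, by rw [min_eq_left hm]⟩
    · exact Or.inr (by rw [min_eq_right hm])
  · refine Or.inr ⟨ho, ?_⟩
    rcases le_total ((h : ℝ) * (d / 2)) m with hm | hm
    · have hh : Odd h := by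
        rw [← Nat.not_even_iff_odd, ← hpar, Nat.not_even_iff_odd]
        exact ho
      obtain ⟨j, rfl⟩ := hh
      have e : ((2 * j + 1 : ℕ) : ℝ) * (d / 2) = j * d + d / 2 := by push_cast; ring
      rw [e] at hm ⊢
      exact Or.inl ⟨j, hm, by rw [min_eq_left hm]⟩
    · exact Or.inr (by rw [min_eq_right hm])

/-- For `p` in a rectangle, the l1 distances to two opposite corners add up to the
half-perimeter, so one of them is at most half of it. -/
lemma dist1_corner_le {a b c e k : ℝ} {p : ℝ × ℝ} (h1 : a ≤ p.1) (h2 : p.1 ≤ b) (h3 : c ≤ p.2)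
    (h4 : p.2 ≤ e) (hk : (b - a) + (e - c) ≤ 2 * k) :
    (dist1 p (a, c) ≤ k ∨ dist1 p (b, e) ≤ k) ∧ (dist1 p (a, e) ≤ k ∨ dist1 p (b, c) ≤ k) := by
  simp only [dist1, abs_of_nonneg (sub_nonneg.2 h1), abs_of_nonpos (sub_nonpos.2 h2),
    abs_of_nonneg (sub_nonneg.2 h3), abs_of_nonpos (sub_nonpos.2 h4)]
  constructor <;> (by_contra! h; linarith [h.1, h.2])

theorem stmt_6 (m n k d : ℝ) (hn : 0 < n) (hmn : n ≤ m) (hk : 0 < k)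
    (hd0 : 0 < d) (hd : d ≤ 2 * k) (r : ℝ) (hr : r = 2 * k - d / 2) :
    ∀ p : ℝ × ℝ, 0 ≤ p.1 → p.1 ≤ n → 0 ≤ p.2 → p.2 ≤ m →
      ∃ s ∈ upDownStops m n d r, dist1 p s ≤ k := by
  intro p hx0 hxn hy0 hym
  have hr0 : 0 < r := by linarith
  have hd2 : 0 < d / 2 := by linarith
  obtain ⟨i, hi1, hi2⟩ : ∃ i : ℕ, (i : ℝ) * r ≤ p.1 ∧ p.1 ≤ ((i + 1 : ℕ) : ℝ) * r :=
    ⟨⌊p.1 / r⌋₊, (le_div_iff₀ hr0).1 (Nat.floor_le (by positivity)),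
      (div_le_iff₀ hr0).1 (by push_cast; exact (Nat.lt_floor_add_one _).le)⟩
  obtain ⟨t, ht1, ht2⟩ : ∃ t : ℕ, (t : ℝ) * (d / 2) ≤ p.2 ∧ p.2 ≤ ((t + 1 : ℕ) : ℝ) * (d / 2) :=
    ⟨⌊p.2 / (d / 2)⌋₊, (le_div_iff₀ hd2).1 (Nat.floor_le (by positivity)),
      (div_le_iff₀ hd2).1 (by push_cast; exact (Nat.lt_floor_add_one _).le)⟩
  have hcol : (i : ℝ) * r ≤ n + r := by linarith
  have hcol' : ((i + 1 : ℕ) : ℝ) * r ≤ n + r := by push_cast; linarith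
  have hgap : (min (((i + 1 : ℕ) : ℝ) * r) n - min ((i : ℝ) * r) n) +
      (min (((t + 1 : ℕ) : ℝ) * (d / 2)) m - min ((t : ℝ) * (d / 2)) m) ≤ 2 * k := by
    rw [min_eq_left (hi1.trans hxn), min_eq_left (ht1.trans hym)]
    have e1 := min_le_left (((i + 1 : ℕ) : ℝ) * r) n
    have e2 := min_le_left (((t + 1 : ℕ) : ℝ) * (d / 2)) m
    push_cast at e1 e2 ⊢
    linarith
  obtain ⟨hsame, hdiff⟩ := dist1_corner_le ((min_le_left _ n).trans hi1) (le_min hi2 hxn)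
    ((min_le_left _ m).trans ht1) (le_min ht2 hym) hgap
  by_cases hpar : Even i ↔ Even t
  · have hpar' : Even (i + 1) ↔ Even (t + 1) := by
      simp only [Nat.even_add_one, hpar]
    rcases hsame with h | h
    · exact ⟨_, mem_upDownStops_of_parity hcol hpar, h⟩
    · exact ⟨_, mem_upDownStops_of_parity hcol' hpar', h⟩
  · have hp1 : Even i ↔ Even (t + 1) := by
      rw [Nat.even_add_one]; tauto
    have hp2 : Even (i + 1) ↔ Even t := by
      rw [Nat.even_add_one]; tauto
    rcases hdiff with h | h
    · exact ⟨_, mem_upDownStops_of_parity hcol hp1, h⟩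
    · exact ⟨_, mem_upDownStops_of_parity hcol' hp2, h⟩
end

section
/- Cost of the up-and-down path for the RC-CPPG: let m ≥ n > 0 be reals, k > 0, and d ∈ (0, 2k]. Then there exist an integer T ≥ 1 and points F(1), …, F(T) in the rectangle [0,n] × [0,m] such that every point of [0,n] × [0,m] is within l1 distance k of some F(i), the number of stops satisfies T ≤ (n/(2k − d/2) + 2)·(m/d + 2), and the path length satisfies ∑_{i=1}^{T−1} dist₁(F(i), F(i+1)) ≤ mn/(2k − d/2) + 3m. -/
/-!
Put `w = 2k - d/2`. The stops lie on vertical columns at abscissas `0, w, 2w, …`, with vertical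
spacing `d` in each column, odd columns being shifted upwards by `d/2`; all coordinates are clipped
to the rectangle, which never moves a stop away from a point of the rectangle. A point of the
rectangle lies between two neighbouring columns, so its horizontal distances to them sum to at most
`w`; because of the shift, its vertical distances to suitable stops on these two columns sum to at
most `d/2` (`exists_stops`). The two l1 distances thus sum to at most `w + d/2 = 2k`, and one of
them is at most `k`.

Even columns are traversed upwards and odd ones downwards. The length is bounded by a telescoping
argument: each step is no longer than the increase of the abscissa plus that of the
potential `pathPot` (`pathPot_step`), which counts `m` for every completed column. The total is at
most `n + m (n/w + 2) ≤ mn/w + 3m`.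
-/

open Finset

/-- Height of the `j`-th visited stop (`j < N`) on column `c`: upwards from `0` on even columns,
downwards to `d/2` on odd columns, clipped at `m`. -/
noncomputable def stopY (m d : ℝ) (N c j : ℕ) : ℝ :=
  if Even c then min (j * d) m else min (((N : ℝ) - j - 1 / 2) * d) m

/-- Vertical potential: `m` for each earlier column, plus the progress made on column `c`. -/
noncomputable def pathPot (m d : ℝ) (N c j : ℕ) : ℝ :=
  c * m + if Even c then stopY m d N c j else m - stopY m d N c j

lemma abs_sub_min_le {y a m : ℝ} (h : y ≤ m) : |y - min a m| ≤ |y - a| := by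
  rcases le_total a m with h1 | h1
  · rw [min_eq_left h1]
  · rw [min_eq_right h1, abs_sub_comm, abs_of_nonneg (by linarith), abs_sub_comm,
      abs_of_nonneg (by linarith)]
    linarith

lemma stopY_mem {m d : ℝ} (hm : 0 ≤ m) (hd : 0 < d) {N c j : ℕ} (hj : j < N) :
    0 ≤ stopY m d N c j ∧ stopY m d N c j ≤ m := by
  have h : (j : ℝ) + 1 ≤ N := by exact_mod_cast hj
  unfold stopY
  split_ifs
  · exact ⟨le_min (by positivity) hm, min_le_right _ _⟩
  · exact ⟨le_min (mul_nonneg (by linarith) hd.le) hm, min_le_right _ _⟩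

/-- Thanks to the shift by `d/2`, every height is close on average to a stop of each of an even
and an odd column. -/
lemma exists_stops {m d y : ℝ} (hd : 0 < d) (hy0 : 0 ≤ y) (hy : y ≤ m) {N a b : ℕ}
    (hN : N = ⌊m / d⌋₊ + 2) (ha : Even a) (hb : ¬ Even b) :
    ∃ i < N, ∃ j < N, |y - stopY m d N a i| + |y - stopY m d N b j| ≤ d / 2 := by
  set q := ⌊y / d⌋₊ with hq
  have h1 : (q : ℝ) * d ≤ y := by
    rw [← le_div_iff₀ hd]; exact Nat.floor_le (by positivity)
  have h2 : y < ((q : ℝ) + 1) * d := by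
    rw [← div_lt_iff₀ hd]; exact Nat.lt_floor_add_one _
  have hqN : q + 2 ≤ N := by
    have : q ≤ ⌊m / d⌋₊ := Nat.floor_le_floor (by gcongr)
    omega
  have hB : |y - stopY m d N b (N - 1 - q)| ≤ |y - (q + 1 / 2) * d| := by
    have hc : ((N - 1 - q : ℕ) : ℝ) = N - 1 - q := by
      rw [Nat.cast_sub (by omega), Nat.cast_sub (by omega)]; simp
    have : ((N : ℝ) - (N - 1 - q : ℕ) - 1 / 2) * d = (q + 1 / 2) * d := by
      rw [hc]; ring
    unfold stopY
    rw [if_neg hb, this]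
    exact abs_sub_min_le hy
  have hA (i : ℕ) : |y - stopY m d N a i| ≤ |y - i * d| := by
    unfold stopY
    rw [if_pos ha]
    exact abs_sub_min_le hy
  rcases le_total y ((q + 1 / 2) * d) with h | h
  · refine ⟨q, by omega, N - 1 - q, by omega, ?_⟩
    have := hA q
    rw [abs_of_nonneg (a := y - q * d) (by linarith)] at this
    rw [abs_of_nonpos (a := y - (q + 1 / 2) * d) (by linarith)] at hB
    linarith
  · refine ⟨q + 1, by omega, N - 1 - q, by omega, ?_⟩
    have := hA (q + 1)
    push_cast at this
    rw [abs_of_nonpos (a := y - (q + 1) * d) (by linarith)] at this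
    rw [abs_of_nonneg (a := y - (q + 1 / 2) * d) (by linarith)] at hB
    linarith

lemma pathPot_step_within {m d : ℝ} (hd : 0 < d) (N c j : ℕ) :
    |stopY m d N c j - stopY m d N c (j + 1)| ≤ pathPot m d N c (j + 1) - pathPot m d N c j := by
  unfold pathPot
  by_cases hc : Even c
  · have : stopY m d N c j ≤ stopY m d N c (j + 1) := by
      simp only [stopY, if_pos hc]
      gcongr
      simp
    rw [abs_of_nonpos (by linarith)]
    simp only [if_pos hc]
    linarith
  · have : stopY m d N c (j + 1) ≤ stopY m d N c j := by
      simp only [stopY, if_neg hc]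
      gcongr
      simp
    rw [abs_of_nonneg (by linarith)]
    simp only [if_neg hc]
    linarith

/-- Passing to the next column: at the top both columns have a stop at height `m`; at the bottom
the descent from `d/2` to `0` is accounted for by the part of the odd column left unvisited. -/
lemma pathPot_step_next {m d : ℝ} (hm : 0 ≤ m) (hd : 0 < d) {N : ℕ} (hN : m ≤ ((N : ℝ) - 1) * d)
    (c j : ℕ) (hj : j + 1 = N) :
    |stopY m d N c j - stopY m d N (c + 1) 0| ≤ pathPot m d N (c + 1) 0 - pathPot m d N c j := by
  have hjr : (j : ℝ) = N - 1 := by rw [← hj]; simp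
  unfold pathPot
  by_cases hc : Even c
  · have hc' : ¬ Even (c + 1) := by simpa [Nat.even_add_one] using hc
    have e1 : stopY m d N c j = m := by
      simp only [stopY, if_pos hc, hjr]
      exact min_eq_right hN
    have e2 : stopY m d N (c + 1) 0 = m := by
      simp only [stopY, if_neg hc']
      apply min_eq_right
      push_cast
      nlinarith
    rw [e1, e2, if_pos hc, if_neg hc']
    push_cast
    simp
    linarith
  · have hc' : Even (c + 1) := by simpa [Nat.even_add_one] using hc
    have e2 : stopY m d N (c + 1) 0 = 0 := by
      simp [stopY, if_pos hc', hm]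
    have h0 := (stopY_mem hm hd (c := c) (j := j) (N := N) (by omega)).1
    rw [e2, if_neg hc, if_pos hc', sub_zero, abs_of_nonneg h0]
    push_cast
    linarith

lemma pathPot_step {m d : ℝ} (hm : 0 ≤ m) (hd : 0 < d) {N : ℕ} (hN0 : 0 < N)
    (hN : m ≤ ((N : ℝ) - 1) * d) (t : ℕ) :
    |stopY m d N (t / N) (t % N) - stopY m d N ((t + 1) / N) ((t + 1) % N)| ≤
      pathPot m d N ((t + 1) / N) ((t + 1) % N) - pathPot m d N (t / N) (t % N) := by
  have hlt := Nat.mod_lt t hN0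
  have hdm := Nat.div_add_mod t N
  by_cases h : t % N + 1 = N
  · have e : t + 1 = N * (t / N + 1) := by rw [mul_add, mul_one]; omega
    have e1 : (t + 1) / N = t / N + 1 := by rw [e]; exact Nat.mul_div_cancel_left _ hN0
    have e2 : (t + 1) % N = 0 := by rw [e]; simp
    rw [e1, e2]
    exact pathPot_step_next hm hd hN _ _ h
  · have e : t + 1 = (t % N + 1) + N * (t / N) := by omega
    have hlt' : t % N + 1 < N := by omega
    have e1 : (t + 1) / N = t / N := by
      conv_lhs => rw [e]
      rw [Nat.add_mul_div_left _ _ hN0, Nat.div_eq_of_lt hlt', zero_add]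
    have e2 : (t + 1) % N = t % N + 1 := by
      conv_lhs => rw [e]
      rw [Nat.add_mul_mod_self_left, Nat.mod_eq_of_lt hlt']
    rw [e1, e2]
    exact pathPot_step_within hd _ _ _

theorem stmt_7 (m n k d : ℝ) (hn : 0 < n) (hmn : n ≤ m) (hk : 0 < k)
    (hd0 : 0 < d) (hd : d ≤ 2 * k) :
    ∃ (T : ℕ) (F : ℕ → ℝ × ℝ), 1 ≤ T ∧
      (∀ i ∈ Finset.Icc 1 T, 0 ≤ (F i).1 ∧ (F i).1 ≤ n ∧ 0 ≤ (F i).2 ∧ (F i).2 ≤ m) ∧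
      (∀ p : ℝ × ℝ, 0 ≤ p.1 → p.1 ≤ n → 0 ≤ p.2 → p.2 ≤ m →
        ∃ i ∈ Finset.Icc 1 T, dist1 p (F i) ≤ k) ∧
      (T : ℝ) ≤ (n / (2 * k - d / 2) + 2) * (m / d + 2) ∧
      ∑ i ∈ Finset.Ico 1 T, dist1 (F i) (F (i + 1)) ≤ m * n / (2 * k - d / 2) + 3 * m := by
  have hm : 0 < m := by linarith
  obtain ⟨w, hw⟩ : ∃ w, w = 2 * k - d / 2 := ⟨_, rfl⟩
  have hw0 : 0 < w := by linarith
  rw [← hw]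
  obtain ⟨N, hN⟩ : ∃ N, N = ⌊m / d⌋₊ + 2 := ⟨_, rfl⟩
  obtain ⟨C, hC⟩ : ∃ C, C = ⌊n / w⌋₊ + 2 := ⟨_, rfl⟩
  have hN0 : 0 < N := by omega
  have hNle : (N : ℝ) ≤ m / d + 2 := by
    rw [hN]; push_cast
    have := Nat.floor_le (a := m / d) (by positivity)
    linarith
  have hCle : (C : ℝ) ≤ n / w + 2 := by
    rw [hC]; push_cast
    have := Nat.floor_le (a := n / w) (by positivity)
    linarith
  have hNm : m ≤ ((N : ℝ) - 1) * d := by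
    rw [← div_le_iff₀ hd0, hN]; push_cast
    have := Nat.lt_floor_add_one (m / d)
    linarith
  let X : ℕ → ℝ := fun c => min (c * w) n
  have hXmono : Monotone X := fun a b hab => by
    simp only [X]
    gcongr
  have hX0 (c : ℕ) : 0 ≤ X c := le_min (by positivity) hn.le
  have hXn (c : ℕ) : X c ≤ n := min_le_right _ _
  -- zero-based version of the path: `t`-th stop in column `t / N`
  let P : ℕ → ℝ × ℝ := fun t => (X (t / N), stopY m d N (t / N) (t % N))
  refine ⟨C * N, fun i => P (i - 1), Nat.mul_pos (by omega) hN0, ?_, ?_, ?_, ?_⟩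
  · intro i _
    have := stopY_mem hm.le hd0 (c := (i - 1) / N) (Nat.mod_lt (i - 1) hN0)
    exact ⟨hX0 _, hXn _, this.1, this.2⟩
  · rintro ⟨x, y⟩ hx0 hxn hy0 hym
    simp only at hx0 hxn hy0 hym
    set q := ⌊x / w⌋₊ with hq
    have h1 : (q : ℝ) * w ≤ x := by
      rw [← le_div_iff₀ hw0]; exact Nat.floor_le (by positivity)
    have h2 : x < ((q : ℝ) + 1) * w := by
      rw [← div_lt_iff₀ hw0]; exact Nat.lt_floor_add_one _
    have hqC : q + 1 < C := by
      have : q ≤ ⌊n / w⌋₊ := Nat.floor_le_floor (by gcongr)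
      omega
    have hXq : |x - X q| + |x - X (q + 1)| ≤ w := by
      have e1 : |x - X q| ≤ |x - q * w| := abs_sub_min_le hxn
      have e2 : |x - X (q + 1)| ≤ |x - (q + 1 : ℕ) * w| := abs_sub_min_le hxn
      push_cast at e2
      rw [abs_of_nonneg (a := x - q * w) (by linarith)] at e1
      rw [abs_of_nonpos (a := x - (q + 1) * w) (by linarith)] at e2
      linarith
    have hYq : ∃ i < N, ∃ j < N,
        |y - stopY m d N q i| + |y - stopY m d N (q + 1) j| ≤ d / 2 := by
      by_cases hc : Even q
      · exact exists_stops hd0 hy0 hym hN hc (by simpa [Nat.even_add_one] using hc)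
      · obtain ⟨i, hi, j, hj, h⟩ := exists_stops hd0 hy0 hym hN
          (a := q + 1) (b := q) (by simpa [Nat.even_add_one] using hc) hc
        exact ⟨j, hj, i, hi, by linarith⟩
    have key (c j : ℕ) (hc : c < C) (hj : j < N)
        (h : |x - X c| + |y - stopY m d N c j| ≤ k) :
        ∃ i ∈ Finset.Icc 1 (C * N), dist1 (x, y) (P (i - 1)) ≤ k := by
      refine ⟨j + N * c + 1, ?_, ?_⟩
      · have : N * (c + 1) ≤ N * C := Nat.mul_le_mul_left _ hc
        rw [Finset.mem_Icc, mul_comm C N]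
        rw [mul_add, mul_one] at this
        omega
      · have e1 : (j + N * c) / N = c := by
          rw [Nat.add_mul_div_left _ _ hN0, Nat.div_eq_of_lt hj, zero_add]
        have e2 : (j + N * c) % N = j := by
          rw [Nat.add_mul_mod_self_left, Nat.mod_eq_of_lt hj]
        simpa only [dist1, P, Nat.add_sub_cancel, e1, e2] using h
    obtain ⟨i, hi, j, hj, hij⟩ := hYq
    by_cases h : |x - X q| + |y - stopY m d N q i| ≤ k
    · exact key q i (by omega) hi h
    · exact key (q + 1) j hqC hj (by linarith)
  · push_cast
    gcongr
  · let Φ : ℕ → ℝ := fun t => X (t / N) + pathPot m d N (t / N) (t % N)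
    have hstep (t : ℕ) : dist1 (P t) (P (t + 1)) ≤ Φ (t + 1) - Φ t := by
      have e1 := pathPot_step hm.le hd0 hN0 hNm t
      have e2 : X (t / N) ≤ X ((t + 1) / N) := hXmono (Nat.div_le_div_right (Nat.le_succ t))
      simp only [dist1, P, Φ]
      rw [abs_of_nonpos (a := X (t / N) - X ((t + 1) / N)) (by linarith)]
      linarith
    have hΦ0 : 0 ≤ Φ 0 := by
      simp [Φ, pathPot, stopY, X, hm.le, hn.le]
    have hΦ (t : ℕ) (ht : t < C * N) : Φ t ≤ n + C * m := by
      have hq : t / N + 1 ≤ C := Nat.div_lt_of_lt_mul (by rwa [mul_comm])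
      have hq' : ((t / N : ℕ) : ℝ) + 1 ≤ C := by exact_mod_cast hq
      have hs := stopY_mem hm.le hd0 (c := t / N) (Nat.mod_lt t hN0)
      have hx := hXn (t / N)
      have hmul : (((t / N : ℕ) : ℝ) + 1) * m ≤ C * m := by gcongr
      simp only [Φ, pathPot]
      split_ifs <;> linarith
    have hpos : 0 < C * N := Nat.mul_pos (by omega) hN0
    have hsum : ∑ i ∈ Finset.Ico 1 (C * N), dist1 (P (i - 1)) (P (i + 1 - 1)) ≤
        Φ (C * N - 1) - Φ 0 := by
      rw [Finset.sum_Ico_eq_sum_range, ← Finset.sum_range_sub]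
      refine Finset.sum_le_sum fun t _ => ?_
      have := hstep t
      rwa [show 1 + t - 1 = t by omega, show 1 + t + 1 - 1 = t + 1 by omega]
    have hlast := hΦ (C * N - 1) (by omega)
    have hCm : (C : ℝ) * m ≤ (n / w + 2) * m := by gcongr
    have e : (n / w + 2) * m = m * n / w + 2 * m := by ring
    linarith
end

section
/- Tightness result for the RC-CPPG: let m ≥ n > 0 be reals, k > 0 with N = mn > 2k², and let L > 0 and T > 1 be reals satisfying (T−1)·f(L/(T−1)) = N − 2k². Then there exist an integer T′ ≥ 1 and points F(1), …, F(T′) in the rectangle [0,n] × [0,m] such that every point of [0,n] × [0,m] is within l1 distance k of some F(i), the path length L′ = ∑_{i=1}^{T′−1} dist₁(F(i), F(i+1)) satisfies L′ − L ≤ 3m + 2k, and T′/T ≤ (1 + 2k²/(N − 2k²))·(1 + 4k/n)². -/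
/-!
The witness is a staggered back-and-forth sweep of the rectangle, in vertical columns.

Fix a step `0 < d ≤ 2k` and put `w = 2k - d/2`. Place vertical columns at `x = 0, w, 2w, …`, with
stops at heights `0, d, 2d, …` on even columns and `d/2, 3d/2, …` on odd columns. A point lying
horizontally between two adjacent columns and vertically between two stops, one on each column,
whose heights differ by `d/2`, has distances to these two stops adding up to `w + d/2 = 2k`, so one
of them is at most `k` (`exists_stop_near`). Projecting the stops onto the rectangle only brings
them closer to points of the rectangle, so the projected stops still cover it.

Traverse even columns upwards and odd columns downwards. After projection the vertical travel is at
most `m` per column (the connection to the next column included) and the horizontal travel is at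
most `n` in total, because the length is controlled by the monotone potential `potential`. With at
most `n/w + 2` columns of at most `m/d + 2` stops each, this gives `exists_sweep`.

For the theorem take `d = min (L/(T-1)) (2k)`. Then `f (L/(T-1)) = d * w`, so
`(T-1) d w = N - 2k²` and `L ≥ (T-1) d = (N - 2k²)/w ≥ mn/w - 2k` because `w ≥ k`; the length bound
`(n/w + 2) m + n ≤ mn/w + 3m` is therefore at most `L + 3m + 2k`. The number of stops is at most
`((n + 4k)/w) ((m + 4k)/d)`, because `w ≤ 2k` and `d ≤ 2k`, and `N/(dw) ≤ T N/(N - 2k²)`.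
-/

open Finset

/-- Height of the `i`-th visited stop of column `j` (before projection), where `i = 0, …, R`: even
columns are traversed upwards through `0, d, …, R d`, odd columns downwards through
`R d + d/2, …, d/2`. -/
noncomputable def stopHeight (d : ℝ) (R j i : ℕ) : ℝ :=
  if Even j then i * d else ((R : ℝ) - i) * d + d / 2

/-- The `i`-th stop of column `j`, projected onto `[0, n] × [0, m]`; the projection is a minimum
because the coordinates are nonnegative for `i ≤ R`. -/
noncomputable def sweepStop (m n d w : ℝ) (R j i : ℕ) : ℝ × ℝ :=
  (min n (j * w), min m (stopHeight d R j i))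

/-- An upper bound for the distance travelled until the `i`-th stop of column `j`: horizontal
position, plus `m` for each completed column, plus the vertical distance from the side of the
rectangle where the traversal of column `j` starts. -/
noncomputable def potential (m n d w : ℝ) (R j i : ℕ) : ℝ :=
  min n (j * w) + j * m +
    (if Even j then min m (stopHeight d R j i) else m - min m (stopHeight d R j i))

lemma stopHeight_nonneg {d : ℝ} (hd : 0 < d) {R j i : ℕ} (hi : i ≤ R) :
    0 ≤ stopHeight d R j i := by
  have h : (0 : ℝ) ≤ (R : ℝ) - i := by
    have : (i : ℝ) ≤ R := by exact_mod_cast hi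
    linarith
  unfold stopHeight
  split_ifs <;> positivity

lemma exists_cell (s : ℝ) (K : ℕ) (x : ℝ) (hx : 0 ≤ x) (hK : 1 ≤ K) (hxK : x ≤ K * s) :
    ∃ j < K, (j : ℝ) * s ≤ x ∧ x ≤ ((j : ℝ) + 1) * s := by
  induction K, hK using Nat.le_induction with
  | base => exact ⟨0, by simp, by simpa using hx, by simpa using hxK⟩
  | succ K _ ih =>
    by_cases h : x ≤ K * s
    · obtain ⟨j, hj, h1⟩ := ih h
      exact ⟨j, by omega, h1⟩
    · exact ⟨K, by omega, le_of_not_ge h, by push_cast at hxK; exact hxK⟩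

/-- Stops on an even and an odd column at distance `w`, with heights differing by `d/2`: a point in
the box they span is within `k` of one of them, as the two distances add up to `w + d/2 = 2k`. -/
lemma near_or_near {x y a b h h' w d k : ℝ} (hw : w + d / 2 = 2 * k)
    (hx : |x - a| + |x - b| = w) (hy : |y - h| + |y - h'| = d / 2) :
    |x - a| + |y - h| ≤ k ∨ |x - b| + |y - h'| ≤ k := by
  by_contra! hc
  linarith [hc.1, hc.2]

lemma abs_add_abs_of_between {x a b : ℝ} (ha : a ≤ x) (hb : x ≤ b) :
    |x - a| + |x - b| = b - a := by
  rw [abs_of_nonneg (by linarith), abs_of_nonpos (by linarith)]; ring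

/-- The staggered columns cover every point of `[0, C w] × [0, R d]`, before projection. -/
lemma exists_stop_near {d w k : ℝ} (hw : w + d / 2 = 2 * k)
    {C R : ℕ} (hC : 1 ≤ C) (hR : 1 ≤ R) {x y : ℝ} (hx : 0 ≤ x) (hxC : x ≤ C * w)
    (hy : 0 ≤ y) (hyR : y ≤ R * d) :
    ∃ j ≤ C, ∃ i ≤ R, |x - j * w| + |y - stopHeight d R j i| ≤ k := by
  obtain ⟨j, hj, hj1, hj2⟩ := exists_cell w C x hx hC hxC
  obtain ⟨e, he, he1, he2⟩ := exists_cell d R y hy hR hyR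
  -- An even-column height and an odd-column height that enclose `y` at distance `d/2`.
  obtain ⟨u, hu, huv⟩ : ∃ u ≤ R, |y - u * d| + |y - (e * d + d / 2)| = d / 2 := by
    rcases le_total y (e * d + d / 2) with h | h
    · exact ⟨e, he.le, by rw [abs_add_abs_of_between he1 h]; ring⟩
    · refine ⟨e + 1, he, ?_⟩
      push_cast
      rw [add_comm, abs_add_abs_of_between h he2]; ring
  have hxx : |x - j * w| + |x - (j + 1 : ℕ) * w| = w := by
    push_cast
    rw [abs_add_abs_of_between hj1 hj2]; ring
  have hodd : ∀ j : ℕ, ¬ Even j → stopHeight d R j (R - e) = e * d + d / 2 := by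
    intro j h
    rw [stopHeight, if_neg h, Nat.cast_sub he.le]; ring
  have heven : ∀ j : ℕ, Even j → stopHeight d R j u = u * d := by
    intro j h
    rw [stopHeight, if_pos h]
  by_cases hp : Even j
  · have hp' : ¬ Even (j + 1) := by simpa [Nat.even_add_one] using hp
    rcases near_or_near hw hxx huv with h | h
    · exact ⟨j, hj.le, u, hu, by rwa [heven j hp]⟩
    · exact ⟨j + 1, hj, R - e, by omega, by rwa [hodd _ hp']⟩
  · have hp' : Even (j + 1) := by simpa [Nat.even_add_one] using hp
    rcases near_or_near hw hxx ((add_comm _ _).trans huv) with h | h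
    · exact ⟨j, hj.le, R - e, by omega, by rwa [hodd _ hp]⟩
    · exact ⟨j + 1, hj, u, hu, by rwa [heven _ hp']⟩

lemma abs_sub_min_le_s8 {x n a : ℝ} (hx : x ≤ n) : |x - min n a| ≤ |x - a| := by
  rcases le_total n a with h | h
  · rw [min_eq_left h, abs_of_nonpos (by linarith), abs_of_nonpos (by linarith)]; linarith
  · rw [min_eq_right h]

/-- A step within a column. -/
lemma dist_step_le {m n d w : ℝ} (hd : 0 < d) (R j i : ℕ) :
    dist1 (sweepStop m n d w R j i) (sweepStop m n d w R j (i + 1)) ≤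
      potential m n d w R j (i + 1) - potential m n d w R j i := by
  unfold dist1 sweepStop potential
  simp only [sub_self, abs_zero, zero_add]
  split_ifs with h
  · have : min m (stopHeight d R j i) ≤ min m (stopHeight d R j (i + 1)) := by
      apply min_le_min_left
      simp only [stopHeight, if_pos h]; push_cast; linarith
    rw [abs_of_nonpos (by linarith)]; linarith
  · have : min m (stopHeight d R j (i + 1)) ≤ min m (stopHeight d R j i) := by
      apply min_le_min_left
      simp only [stopHeight, if_neg h]; push_cast; linarith
    rw [abs_of_nonneg (by linarith)]; linarith

/-- The connection from the end of a column to the start of the next. -/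
lemma dist_turn_le {m n d w : ℝ} (hm : 0 < m) (hd : 0 < d) (hw : 0 < w) {R : ℕ}
    (hR : m ≤ R * d) (j : ℕ) :
    dist1 (sweepStop m n d w R j R) (sweepStop m n d w R (j + 1) 0) ≤
      potential m n d w R (j + 1) 0 - potential m n d w R j R := by
  have hx : min n (j * w) ≤ min n ((j + 1 : ℕ) * w) := by
    apply min_le_min_left; push_cast; linarith
  unfold dist1 sweepStop potential
  simp only
  rw [abs_of_nonpos (sub_nonpos.2 hx)]
  by_cases h : Even j
  · have h' : ¬ Even (j + 1) := by simpa [Nat.even_add_one] using h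
    have e1 : min m (stopHeight d R j R) = m := by
      rw [stopHeight, if_pos h]; exact min_eq_left hR
    have e2 : min m (stopHeight d R (j + 1) 0) = m := by
      rw [stopHeight, if_neg h']; apply min_eq_left; push_cast; linarith
    rw [e1, e2, if_pos h, if_neg h', sub_self, abs_zero]
    push_cast; linarith
  · have h' : Even (j + 1) := by simpa [Nat.even_add_one] using h
    have e1 : 0 ≤ min m (stopHeight d R j R) := le_min hm.le (stopHeight_nonneg hd le_rfl)
    have e2 : min m (stopHeight d R (j + 1) 0) = 0 := by
      rw [stopHeight, if_pos h']; simp [hm.le]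
    rw [e2, if_neg h, if_pos h', sub_zero, abs_of_nonneg e1]
    push_cast; linarith

/-- The sweep with column distance `w = 2k - d/2` and step `d`. -/
lemma exists_sweep {m n k d w : ℝ} (hm : 0 < m) (hn : 0 < n) (hd : 0 < d) (hw : 0 < w)
    (hwd : w + d / 2 = 2 * k) :
    ∃ (T' : ℕ) (F : ℕ → ℝ × ℝ), 1 ≤ T' ∧
      (∀ i ∈ Finset.Icc 1 T', 0 ≤ (F i).1 ∧ (F i).1 ≤ n ∧ 0 ≤ (F i).2 ∧ (F i).2 ≤ m) ∧
      (∀ p : ℝ × ℝ, 0 ≤ p.1 → p.1 ≤ n → 0 ≤ p.2 → p.2 ≤ m →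
        ∃ i ∈ Finset.Icc 1 T', dist1 p (F i) ≤ k) ∧
      (∑ i ∈ Finset.Ico 1 T', dist1 (F i) (F (i + 1))) ≤ (n / w + 2) * m + n ∧
      (T' : ℝ) ≤ (n / w + 2) * (m / d + 2) := by
  -- Columns `0, …, C` and stops `0, …, R` in each column reach the far sides of the rectangle.
  obtain ⟨C, hC⟩ : ∃ C : ℕ, C = ⌈n / w⌉₊ := ⟨_, rfl⟩
  obtain ⟨R, hR⟩ : ∃ R : ℕ, R = ⌈m / d⌉₊ := ⟨_, rfl⟩
  have hC1 : 1 ≤ C := by rw [hC]; exact Nat.ceil_pos.2 (by positivity)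
  have hR1 : 1 ≤ R := by rw [hR]; exact Nat.ceil_pos.2 (by positivity)
  have hCn : n ≤ C * w := by rw [← div_le_iff₀ hw, hC]; exact Nat.le_ceil _
  have hRm : m ≤ R * d := by rw [← div_le_iff₀ hd, hR]; exact Nat.le_ceil _
  have hCu : (C : ℝ) + 1 ≤ n / w + 2 := by
    have := Nat.ceil_lt_add_one (a := n / w) (by positivity)
    rw [← hC] at this; linarith
  have hRu : (R : ℝ) + 1 ≤ m / d + 2 := by
    have := Nat.ceil_lt_add_one (a := m / d) (by positivity)
    rw [← hR] at this; linarith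
  clear hC hR
  have hmod : ∀ t : ℕ, t % (R + 1) ≤ R := fun t => Nat.lt_succ_iff.1 (Nat.mod_lt _ (by omega))
  -- Stops are numbered from `1`, so number `t` belongs to column `(t - 1) / (R + 1)`.
  let F : ℕ → ℝ × ℝ := fun t => sweepStop m n d w R ((t - 1) / (R + 1)) ((t - 1) % (R + 1))
  let Φ : ℕ → ℝ := fun t => potential m n d w R (t / (R + 1)) (t % (R + 1))
  have hstep : ∀ t : ℕ, dist1 (F (1 + t)) (F (1 + t + 1)) ≤ Φ (t + 1) - Φ t := by
    intro t
    have e1 : 1 + t - 1 = t := by omega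
    have e2 : 1 + t + 1 - 1 = t + 1 := by omega
    simp only [F, Φ, e1, e2]
    have hdm := Nat.div_add_mod t (R + 1)
    have hlt := hmod t
    generalize t / (R + 1) = j at *
    generalize t % (R + 1) = i at *
    rcases hlt.lt_or_eq with h | h
    · have e3 : (t + 1) / (R + 1) = j := by
        rw [← hdm, add_assoc, Nat.mul_add_div (by omega), Nat.div_eq_of_lt (by omega), add_zero]
      have e4 : (t + 1) % (R + 1) = i + 1 := by
        rw [← hdm, add_assoc, Nat.mul_add_mod, Nat.mod_eq_of_lt (by omega)]
      rw [e3, e4]; exact dist_step_le hd R j i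
    · subst h
      have e : t + 1 = (i + 1) * (j + 1) := by rw [← hdm]; ring
      have e3 : (t + 1) / (i + 1) = j + 1 := by rw [e, Nat.mul_div_cancel_left _ (by omega)]
      have e4 : (t + 1) % (i + 1) = 0 := by rw [e, Nat.mul_mod_right]
      rw [e3, e4]; exact dist_turn_le hm hd hw hRm j
  refine ⟨(C + 1) * (R + 1), F, Nat.mul_pos (by omega) (by omega), ?_, ?_, ?_, ?_⟩
  · intro t _
    exact ⟨le_min hn.le (by positivity), min_le_left _ _,
      le_min hm.le (stopHeight_nonneg hd (hmod _)), min_le_left _ _⟩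
  · intro p h1 h2 h3 h4
    obtain ⟨j, hj, i, hi, h⟩ := exists_stop_near hwd hC1 hR1 h1 (h2.trans hCn) h3 (h4.trans hRm)
    refine ⟨(R + 1) * j + i + 1, ?_, ?_⟩
    · rw [Finset.mem_Icc]
      have : (R + 1) * j ≤ (R + 1) * C := Nat.mul_le_mul_left _ hj
      exact ⟨by omega, by nlinarith⟩
    · have e3 : ((R + 1) * j + i + 1 - 1) / (R + 1) = j := by
        rw [Nat.add_sub_cancel, Nat.mul_add_div (by omega), Nat.div_eq_of_lt (by omega), add_zero]
      have e4 : ((R + 1) * j + i + 1 - 1) % (R + 1) = i := by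
        rw [Nat.add_sub_cancel, Nat.mul_add_mod, Nat.mod_eq_of_lt (by omega)]
      simp only [F, e3, e4]
      exact (add_le_add (abs_sub_min_le_s8 h2) (abs_sub_min_le_s8 h4)).trans h
  · rw [Finset.sum_Ico_eq_sum_range]
    refine (Finset.sum_le_sum fun t _ => hstep t).trans ?_
    rw [Finset.sum_range_sub]
    have hlast : (C + 1) * (R + 1) - 1 = (R + 1) * C + R := by
      have : (C + 1) * (R + 1) = (R + 1) * C + R + 1 := by ring
      omega
    have e3 : ((R + 1) * C + R) / (R + 1) = C := by
      rw [Nat.mul_add_div (by omega), Nat.div_eq_of_lt (by omega), add_zero]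
    have e4 : ((R + 1) * C + R) % (R + 1) = R := by
      rw [Nat.mul_add_mod, Nat.mod_eq_of_lt (by omega)]
    have h0 : Φ 0 = 0 := by simp [Φ, potential, stopHeight, hm.le, hn.le]
    have hend : Φ ((C + 1) * (R + 1) - 1) ≤ n + C * m + m := by
      rw [hlast]
      simp only [Φ, e3, e4, potential]
      have hpos : 0 ≤ min m (stopHeight d R C R) := le_min hm.le (stopHeight_nonneg hd le_rfl)
      have hle := min_le_left m (stopHeight d R C R)
      have := min_le_left n (C * w)
      split_ifs <;> linarith
    rw [h0]
    nlinarith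
  · push_cast
    exact mul_le_mul hCu hRu (by positivity) (by positivity)

theorem stmt_8 (m n k : ℝ) (hn : 0 < n) (hmn : n ≤ m) (hk : 0 < k)
    (N : ℝ) (hN : N = m * n) (hNk : 2 * k ^ 2 < N)
    (L T : ℝ) (hL : 0 < L) (hT : 1 < T)
    (heq : (T - 1) * tradeoffF k (L / (T - 1)) = N - 2 * k ^ 2) :
    ∃ (T' : ℕ) (F : ℕ → ℝ × ℝ), 1 ≤ T' ∧
      (∀ i ∈ Finset.Icc 1 T', 0 ≤ (F i).1 ∧ (F i).1 ≤ n ∧ 0 ≤ (F i).2 ∧ (F i).2 ≤ m) ∧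
      (∀ p : ℝ × ℝ, 0 ≤ p.1 → p.1 ≤ n → 0 ≤ p.2 → p.2 ≤ m →
        ∃ i ∈ Finset.Icc 1 T', dist1 p (F i) ≤ k) ∧
      (∑ i ∈ Finset.Ico 1 T', dist1 (F i) (F (i + 1))) - L ≤ 3 * m + 2 * k ∧
      (T' : ℝ) / T ≤ (1 + 2 * k ^ 2 / (N - 2 * k ^ 2)) * (1 + 4 * k / n) ^ 2 := by
  have hm : 0 < m := hn.trans_le hmn
  have hT1 : 0 < T - 1 := by linarith
  -- The step `d = min (L/(T-1)) (2k)`; beyond `2k` the function `f` is constant.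
  obtain ⟨d, hd, hd2, hLd, hf⟩ : ∃ d : ℝ, 0 < d ∧ d ≤ 2 * k ∧ (T - 1) * d ≤ L ∧
      tradeoffF k (L / (T - 1)) = d * (2 * k - d / 2) := by
    by_cases h : L / (T - 1) ≤ 2 * k
    · exact ⟨L / (T - 1), by positivity, h, (mul_div_cancel₀ L hT1.ne').le, by
        rw [tradeoffF, if_pos h]⟩
    · refine ⟨2 * k, by positivity, le_rfl, ?_, by rw [tradeoffF, if_neg h]; ring⟩
      rw [mul_comm, ← le_div_iff₀ hT1]; exact (not_le.1 h).le
  obtain ⟨w, hw⟩ : ∃ w, w = 2 * k - d / 2 := ⟨_, rfl⟩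
  have hwk : k ≤ w := by linarith
  have hw2 : w ≤ 2 * k := by linarith
  have hw0 : 0 < w := by linarith
  rw [hf, ← hw] at heq
  obtain ⟨T', F, h1, h2, h3, h4, h5⟩ := exists_sweep hm hn hd hw0 (k := k) (by linarith)
  refine ⟨T', F, h1, h2, h3, ?_, ?_⟩
  · have hLN : n / w * m - 2 * k ≤ L := by
      refine le_trans ?_ hLd
      have e : (T - 1) * d = (m * n - 2 * k ^ 2) / w := by
        rw [eq_div_iff hw0.ne']; linarith
      have e2 : 2 * k ^ 2 / w ≤ 2 * k := by
        rw [div_le_iff₀ hw0]; nlinarith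
      have e3 : (m * n - 2 * k ^ 2) / w = n / w * m - 2 * k ^ 2 / w := by ring
      linarith
    linarith
  · have hD : 0 < N - 2 * k ^ 2 := by linarith
    have hcol : n / w + 2 ≤ n / w * (1 + 4 * k / n) := by
      have e : n / w * (1 + 4 * k / n) = n / w + 4 * k / w := by field_simp
      have : 2 ≤ 4 * k / w := by rw [le_div_iff₀ hw0]; linarith
      linarith
    have hrow : m / d + 2 ≤ m / d * (1 + 4 * k / n) := by
      have e : m / d * (1 + 4 * k / m) = m / d + 4 * k / d := by field_simp
      have : 2 ≤ 4 * k / d := by rw [le_div_iff₀ hd]; linarith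
      have h : 4 * k / m ≤ 4 * k / n := div_le_div_of_nonneg_left (by positivity) hn hmn
      have := mul_le_mul_of_nonneg_left h (show 0 ≤ m / d by positivity)
      linarith
    have hfac : n / w * (m / d) ≤ (1 + 2 * k ^ 2 / (N - 2 * k ^ 2)) * T := by
      have e : 1 + 2 * k ^ 2 / (N - 2 * k ^ 2) = N / (N - 2 * k ^ 2) := by field_simp; ring
      have e2 : n / w * (m / d) = N / (N - 2 * k ^ 2) * (T - 1) := by
        rw [← heq, hN]; field_simp
      have : 0 < N / (N - 2 * k ^ 2) := div_pos (by nlinarith) hD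
      rw [e, e2]; nlinarith
    rw [div_le_iff₀ (by linarith)]
    calc (T' : ℝ) ≤ (n / w + 2) * (m / d + 2) := h5
      _ ≤ (n / w * (1 + 4 * k / n)) * (m / d * (1 + 4 * k / n)) :=
        mul_le_mul hcol hrow (by positivity) (by positivity)
      _ = n / w * (m / d) * (1 + 4 * k / n) ^ 2 := by ring
      _ ≤ (1 + 2 * k ^ 2 / (N - 2 * k ^ 2)) * T * (1 + 4 * k / n) ^ 2 :=
        mul_le_mul_of_nonneg_right hfac (by positivity)
      _ = _ := by ring
end

section
/- Minimum path length in the RC-CPPG: let m ≥ n > 0 be reals and k > 0. For every integer T ≥ 1 and every sequence of stops F(1), …, F(T) in ℝ² such that every point of the rectangle [0,n] × [0,m] is within l1 distance k of some F(i), the path length satisfies ∑_{i=1}^{T−1} dist₁(F(i), F(i+1)) ≥ mn/(2k) − k. -/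
/-!
The proof is an area count. The closed l1 ball of radius `k` is a diamond of area `2k²`, and moving
its centre from `p` to `q` uncovers new area at most `2k · dist1 p q`: for a move along one axis,
each slice parallel to that axis is an interval that gets translated, hence gains at most the
length of the move, and the slices that meet the diamond form a family of width `2k`; a general
move is a vertical one followed by a horizontal one (`volume_diamond_diff_le`). Adding up along
the tour, the union of the balls around the stops has area at most `2k² + 2kL`
(`volume_iUnion_diamond_le`). This union contains the rectangle, so `mn ≤ 2k² + 2kL`.
-/

open Finset

open MeasureTheory

/-- The closed l1 ball of radius `k` around `c`. -/
def diamond (k : ℝ) (c : ℝ × ℝ) : Set (ℝ × ℝ) := {p | dist1 p c ≤ k}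

lemma measurableSet_diamond (k : ℝ) (c : ℝ × ℝ) : MeasurableSet (diamond k c) := by
  apply IsClosed.measurableSet
  unfold diamond dist1
  exact isClosed_le (by fun_prop) continuous_const

/-- The area of a diamond, as the integral of the lengths of its vertical slices; the truncation
in `ENNReal.ofReal` accounts for the empty slices. -/
lemma volume_diamond_le {k : ℝ} (hk : 0 < k) (c : ℝ × ℝ) :
    volume (diamond k c) ≤ ENNReal.ofReal (2 * k ^ 2) := by
  rw [Measure.volume_eq_prod, Measure.prod_apply (measurableSet_diamond k c)]
  have h1 : ∀ x : ℝ, volume (Prod.mk x ⁻¹' diamond k c) ≤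
      ENNReal.ofReal (2 * (k - |x - c.1|)) := by
    intro x
    calc volume (Prod.mk x ⁻¹' diamond k c)
        ≤ volume (Set.Icc (c.2 - (k - |x - c.1|)) (c.2 + (k - |x - c.1|))) := by
          apply measure_mono
          intro y hy
          have hy' : |x - c.1| + |y - c.2| ≤ k := hy
          have := abs_le.1 (show |y - c.2| ≤ k - |x - c.1| by linarith)
          exact ⟨by linarith [this.1], by linarith [this.2]⟩
      _ = _ := by rw [Real.volume_Icc]; congr 1; ring
  refine (lintegral_mono h1).trans ?_
  rw [lintegral_sub_right_eq_self (fun x : ℝ => ENNReal.ofReal (2 * (k - |x|))) c.1]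
  have h2 : ∀ x : ℝ, ENNReal.ofReal (2 * (k - |x|)) =
      (Set.Ioc (-k) k).indicator (fun x : ℝ => ENNReal.ofReal (2 * (k - |x|))) x := by
    intro x
    by_cases hx : x ∈ Set.Ioc (-k) k
    · rw [Set.indicator_of_mem hx]
    · rw [Set.indicator_of_notMem hx, ENNReal.ofReal_eq_zero]
      by_contra! h
      have := abs_lt.1 (show |x| < k by linarith)
      exact hx ⟨this.1, this.2.le⟩
  rw [lintegral_congr h2, lintegral_indicator measurableSet_Ioc,
    ← ofReal_integral_eq_lintegral_ofReal]
  · apply le_of_eq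
    congr 1
    have hc : Continuous fun x : ℝ => 2 * (k - |x|) := by fun_prop
    rw [← intervalIntegral.integral_of_le (by linarith),
      ← intervalIntegral.integral_add_adjacent_intervals (b := 0)
        (hc.intervalIntegrable _ _) (hc.intervalIntegrable _ _)]
    have e1 : ∫ x in (-k)..0, 2 * (k - |x|) = ∫ x in (-k)..0, (2 * k + 2 * x) := by
      apply intervalIntegral.integral_congr
      intro x hx
      rw [Set.uIcc_of_le (by linarith)] at hx
      simp only [abs_of_nonpos hx.2]
      ring
    have e2 : ∫ x in (0 : ℝ)..k, 2 * (k - |x|) = ∫ x in (0 : ℝ)..k, (2 * k - 2 * x) := by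
      apply intervalIntegral.integral_congr
      intro x hx
      rw [Set.uIcc_of_le hk.le] at hx
      simp only [abs_of_nonneg hx.1]
      ring
    rw [e1, e2, intervalIntegral.integral_add (by simp)
        (Continuous.intervalIntegrable (by fun_prop) _ _),
      intervalIntegral.integral_sub (by simp)
        (Continuous.intervalIntegrable (by fun_prop) _ _)]
    simp only [intervalIntegral.integral_const, smul_eq_mul]
    rw [intervalIntegral.integral_const_mul, intervalIntegral.integral_const_mul, integral_id,
      integral_id]
    ring
  · have hc : Continuous fun x : ℝ => 2 * (k - |x|) := by fun_prop
    exact (hc.integrableOn_Icc).mono_set Set.Ioc_subset_Icc_self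
  · filter_upwards [ae_restrict_mem measurableSet_Ioc] with x hx
    have := abs_le.2 ⟨hx.1.le, hx.2⟩
    simp only [Pi.zero_apply]
    linarith

/-- Translating an interval, given by centre `b` and radius `r`, to the centre `b'` gains length at
most `|b' - b|`. -/
lemma volume_shift_diff_le (b b' r : ℝ) :
    volume {y : ℝ | |y - b'| ≤ r ∧ ¬ |y - b| ≤ r} ≤ ENNReal.ofReal |b' - b| := by
  rcases le_total b b' with h | h
  · calc _ ≤ volume (Set.Icc (b + r) (b' + r)) := by
          apply measure_mono
          rintro y ⟨h1, h2⟩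
          rw [abs_le] at h1 h2
          refine ⟨?_, by linarith [h1.2]⟩
          by_contra! h3
          exact h2 ⟨by linarith [h1.1], by linarith⟩
      _ = _ := by rw [Real.volume_Icc, abs_of_nonneg (by linarith)]; congr 1; ring
  · calc _ ≤ volume (Set.Icc (b' - r) (b - r)) := by
          apply measure_mono
          rintro y ⟨h1, h2⟩
          rw [abs_le] at h1 h2
          refine ⟨by linarith [h1.1], ?_⟩
          by_contra! h3
          exact h2 ⟨by linarith, by linarith [h1.2]⟩
      _ = _ := by rw [Real.volume_Icc, abs_of_nonpos (by linarith)]; congr 1; ring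

/-- Integrating over the slices through a diamond of half-width `k`, each of which has measure at
most `d`. -/
lemma lintegral_slices_le {k : ℝ} (hk : 0 < k) (a d : ℝ) (f : ℝ → ENNReal)
    (hf : ∀ x, f x ≤ ENNReal.ofReal d) (h0 : ∀ x, k < |x - a| → f x = 0) :
    ∫⁻ x, f x ≤ ENNReal.ofReal (2 * k * d) := by
  calc ∫⁻ x, f x ≤ ∫⁻ x, (Set.Icc (a - k) (a + k)).indicator (fun _ => ENNReal.ofReal d) x := by
        apply lintegral_mono
        intro x
        by_cases hx : x ∈ Set.Icc (a - k) (a + k)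
        · rw [Set.indicator_of_mem hx]
          exact hf x
        · rw [Set.indicator_of_notMem hx, h0 x]
          by_contra! h
          rw [abs_le] at h
          exact hx ⟨by linarith [h.1], by linarith [h.2]⟩
    _ = ENNReal.ofReal (2 * k * d) := by
        rw [lintegral_indicator_const measurableSet_Icc, Real.volume_Icc, mul_comm,
          ← ENNReal.ofReal_mul (by linarith)]
        congr 1
        ring

lemma volume_diamond_diff_vertical_le {k : ℝ} (hk : 0 < k) (a b b' : ℝ) :
    volume (diamond k (a, b') \ diamond k (a, b)) ≤ ENNReal.ofReal (2 * k * |b' - b|) := by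
  rw [Measure.volume_eq_prod, Measure.prod_apply
    ((measurableSet_diamond _ _).diff (measurableSet_diamond _ _))]
  apply lintegral_slices_le hk a
  · intro x
    refine (measure_mono ?_).trans (volume_shift_diff_le b b' (k - |x - a|))
    rintro y ⟨h1, h2⟩
    simp only [diamond, dist1, Set.mem_ofPred_eq] at h1 h2 ⊢
    exact ⟨by linarith, fun h => h2 (by linarith)⟩
  · intro x hx
    convert measure_empty (μ := (volume : Measure ℝ))
    ext y
    simp only [diamond, dist1, Set.mem_preimage, Set.mem_sdiff, Set.mem_ofPred_eq,
      Set.mem_empty_iff_false, iff_false]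
    rintro ⟨h1, -⟩
    linarith [abs_nonneg (y - b')]

lemma volume_diamond_diff_horizontal_le {k : ℝ} (hk : 0 < k) (a a' b : ℝ) :
    volume (diamond k (a', b) \ diamond k (a, b)) ≤ ENNReal.ofReal (2 * k * |a' - a|) := by
  rw [Measure.volume_eq_prod, Measure.prod_apply_symm
    ((measurableSet_diamond _ _).diff (measurableSet_diamond _ _))]
  apply lintegral_slices_le hk b
  · intro y
    refine (measure_mono ?_).trans (volume_shift_diff_le a a' (k - |y - b|))
    rintro x ⟨h1, h2⟩
    simp only [diamond, dist1, Set.mem_ofPred_eq] at h1 h2 ⊢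
    exact ⟨by linarith, fun h => h2 (by linarith)⟩
  · intro y hy
    convert measure_empty (μ := (volume : Measure ℝ))
    ext x
    simp only [diamond, dist1, Set.mem_preimage, Set.mem_sdiff, Set.mem_ofPred_eq,
      Set.mem_empty_iff_false, iff_false]
    rintro ⟨h1, -⟩
    linarith [abs_nonneg (x - a')]

/-- Moving the centre of a diamond from `p` to `q` uncovers new area at most `2k` times the l1
length of the move; the intermediate diamond is centred at `(p.1, q.2)`. -/
lemma volume_diamond_diff_le {k : ℝ} (hk : 0 < k) (p q : ℝ × ℝ) :
    volume (diamond k q \ diamond k p) ≤ ENNReal.ofReal (2 * k * dist1 p q) := by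
  obtain ⟨a, b⟩ := p
  obtain ⟨a', b'⟩ := q
  calc volume (diamond k (a', b') \ diamond k (a, b))
      ≤ volume ((diamond k (a', b') \ diamond k (a, b')) ∪
          (diamond k (a, b') \ diamond k (a, b))) := by
        apply measure_mono
        intro z hz
        by_cases h : z ∈ diamond k (a, b')
        · exact Or.inr ⟨h, hz.2⟩
        · exact Or.inl ⟨hz.1, h⟩
    _ ≤ _ := measure_union_le _ _
    _ ≤ ENNReal.ofReal (2 * k * |a' - a|) + ENNReal.ofReal (2 * k * |b' - b|) :=
        add_le_add (volume_diamond_diff_horizontal_le hk _ _ _)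
          (volume_diamond_diff_vertical_le hk _ _ _)
    _ = _ := by
        rw [← ENNReal.ofReal_add (by positivity) (by positivity)]
        simp only [dist1, abs_sub_comm a a', abs_sub_comm b b']
        congr 1
        ring

lemma dist1_nonneg (p q : ℝ × ℝ) : 0 ≤ dist1 p q := by
  unfold dist1
  positivity

/-- The area covered by a tour is at most `2k² + 2kL`, with `L` the length of the tour. -/
lemma volume_iUnion_diamond_le {k : ℝ} (hk : 0 < k) (F : ℕ → ℝ × ℝ) {T : ℕ} (hT : 1 ≤ T) :
    volume (⋃ i ∈ Finset.Icc 1 T, diamond k (F i)) ≤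
      ENNReal.ofReal (2 * k ^ 2 + 2 * k * ∑ i ∈ Finset.Ico 1 T, dist1 (F i) (F (i + 1))) := by
  induction T, hT using Nat.le_induction with
  | base => simpa using volume_diamond_le hk (F 1)
  | succ t ht ih =>
    have hS : 0 ≤ ∑ i ∈ Finset.Ico 1 t, dist1 (F i) (F (i + 1)) :=
      Finset.sum_nonneg fun i _ => dist1_nonneg _ _
    have hd := dist1_nonneg (F t) (F (t + 1))
    calc volume (⋃ i ∈ Finset.Icc 1 (t + 1), diamond k (F i))
        ≤ volume ((⋃ i ∈ Finset.Icc 1 t, diamond k (F i)) ∪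
            (diamond k (F (t + 1)) \ diamond k (F t))) := by
          apply measure_mono
          intro z hz
          simp only [Set.mem_iUnion, Finset.mem_Icc, exists_prop] at hz
          obtain ⟨i, ⟨hi1, hi2⟩, hz⟩ := hz
          simp only [Set.mem_union, Set.mem_iUnion, Finset.mem_Icc, exists_prop]
          rcases Nat.lt_or_ge t i with h | h
          · obtain rfl : i = t + 1 := by omega
            by_cases hzt : z ∈ diamond k (F t)
            · exact Or.inl ⟨t, ⟨ht, le_rfl⟩, hzt⟩
            · exact Or.inr ⟨hz, hzt⟩
          · exact Or.inl ⟨i, ⟨hi1, h⟩, hz⟩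
      _ ≤ _ := measure_union_le _ _
      _ ≤ _ := add_le_add ih (volume_diamond_diff_le hk _ _)
      _ = _ := by
          rw [← ENNReal.ofReal_add (by positivity) (by positivity), Finset.sum_Ico_succ_top ht]
          congr 1
          ring

theorem stmt_11 (m n k : ℝ) (hn : 0 < n) (hmn : n ≤ m) (hk : 0 < k)
    (T : ℕ) (hT : 1 ≤ T) (F : ℕ → ℝ × ℝ)
    (hcov : ∀ p : ℝ × ℝ, 0 ≤ p.1 → p.1 ≤ n → 0 ≤ p.2 → p.2 ≤ m →
      ∃ i ∈ Finset.Icc 1 T, dist1 p (F i) ≤ k) :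
    ∑ i ∈ Finset.Ico 1 T, dist1 (F i) (F (i + 1)) ≥ m * n / (2 * k) - k := by
  have hS : 0 ≤ ∑ i ∈ Finset.Ico 1 T, dist1 (F i) (F (i + 1)) :=
    Finset.sum_nonneg fun i _ => dist1_nonneg _ _
  have hsub : Set.Icc (0 : ℝ) n ×ˢ Set.Icc (0 : ℝ) m ⊆
      ⋃ i ∈ Finset.Icc 1 T, diamond k (F i) := by
    rintro p ⟨h1, h2⟩
    obtain ⟨i, hi, h⟩ := hcov p h1.1 h1.2 h2.1 h2.2
    exact Set.mem_biUnion hi h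
  have hvol := (measure_mono hsub).trans (volume_iUnion_diamond_le hk F hT)
  rw [Measure.volume_eq_prod, Measure.prod_prod, Real.volume_Icc, Real.volume_Icc,
    ← ENNReal.ofReal_mul (by linarith), ENNReal.ofReal_le_ofReal_iff (by positivity)] at hvol
  rw [ge_iff_le, sub_le_iff_le_add, div_le_iff₀ (by positivity)]
  linarith
end

section
/- For every real k > 0 and all integers p, q, the number of integer points z ∈ ℤ² with dist₁(z,(0,0)) ≤ k and dist₁(z,(|p|+|q|, 0)) ≤ k is at most the number of integer points z ∈ ℤ² with dist₁(z,(0,0)) ≤ k and dist₁(z,(p,q)) ≤ k. -/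
/-!
In the coordinates `u = x + y`, `v = x - y` an l1 ball is a square, so the intersection of the two
balls is a rectangle. Put `n = |p| + |q|` and `K = ⌊k⌋`. When `|q| ≤ p`, both `p + q` and `p - q`
lie in `[0, n]`, so the rectangle `u ∈ [p + q - K, K]`, `v ∈ [p - q - K, K]` for the center `(p, q)`
contains the square `u, v ∈ [n - K, K]` for the center `(n, 0)`: the claim is then an inclusion of
sets. The other positions of `(p, q)` reduce to this one by a symmetry of `ℤ²`
(`z ↦ -z`, the swap of coordinates, or both), which preserves the l1 norm.
-/

theorem lens_finite (K p q : ℤ) :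
    {z : ℤ × ℤ | |z.1| + |z.2| ≤ K ∧ |z.1 - p| + |z.2 - q| ≤ K}.Finite := by
  refine (Set.finite_Icc ((-K, -K) : ℤ × ℤ) (K, K)).subset ?_
  rintro ⟨x, y⟩ ⟨h, -⟩
  simp only [Set.mem_Icc, Prod.mk_le_mk]
  simp only [abs_eq_max_neg] at h
  omega

theorem lens_subset {K p q x y : ℤ} (hpq : |q| ≤ p) (h₁ : |x| + |y| ≤ K)
    (h₂ : |x - (|p| + |q|)| + |y| ≤ K) : |x - p| + |y - q| ≤ K := by
  simp only [abs_eq_max_neg] at *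
  omega

theorem stmt_16 (k : ℝ) (hk : 0 < k) (p q : ℤ) :
    Set.ncard {z : ℤ × ℤ |
        (|z.1| + |z.2| : ℤ) ≤ k ∧ (|z.1 - (|p| + |q|)| + |z.2| : ℤ) ≤ k} ≤
      Set.ncard {z : ℤ × ℤ |
        (|z.1| + |z.2| : ℤ) ≤ k ∧ (|z.1 - p| + |z.2 - q| : ℤ) ≤ k} := by
  simp only [← Int.le_floor]
  generalize ⌊k⌋ = K
  have hfin := lens_finite K p q
  have hcases : |q| ≤ p ∨ |q| ≤ -p ∨ |p| ≤ q ∨ |p| ≤ -q := by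
    simp only [abs_eq_max_neg]
    omega
  rcases hcases with h | h | h | h
  · exact Set.ncard_le_ncard (fun z hz => ⟨hz.1, lens_subset h hz.1 hz.2⟩) hfin
  · refine Set.ncard_le_ncard_of_injOn (fun z => (-z.1, -z.2)) ?_ ?_ hfin
    · rintro ⟨x, y⟩ ⟨h₁, h₂⟩
      have h₃ : |x - -p| + |y - -q| ≤ K :=
        lens_subset (by simpa only [abs_neg] using h) h₁
          (by simpa only [abs_neg] using h₂)
      have ep : |-x - p| = |x - -p| := by rw [← abs_neg]; congr 1; ring
      have eq : |-y - q| = |y - -q| := by rw [← abs_neg]; congr 1; ring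
      simp only [Set.mem_ofPred_eq, abs_neg, ep, eq]
      exact ⟨h₁, h₃⟩
    · rintro ⟨x, y⟩ - ⟨x', y'⟩ - e
      simpa using e
  · refine Set.ncard_le_ncard_of_injOn (fun z => (z.2, z.1)) ?_ ?_ hfin
    · rintro ⟨x, y⟩ ⟨h₁, h₂⟩
      have h₃ : |x - q| + |y - p| ≤ K :=
        lens_subset (by simpa only [abs_neg] using h) h₁
          (by simpa only [abs_neg, add_comm |q|] using h₂)
      exact ⟨(add_comm _ _).trans_le h₁, (add_comm _ _).trans_le h₃⟩
    · rintro ⟨x, y⟩ - ⟨x', y'⟩ - e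
      simpa [and_comm] using e
  · refine Set.ncard_le_ncard_of_injOn (fun z => (-z.2, -z.1)) ?_ ?_ hfin
    · rintro ⟨x, y⟩ ⟨h₁, h₂⟩
      have h₃ : |x - -q| + |y - -p| ≤ K :=
        lens_subset (by simpa only [abs_neg] using h) h₁
          (by simpa only [abs_neg, add_comm |q|] using h₂)
      have ep : |-y - p| = |y - -p| := by rw [← abs_neg]; congr 1; ring
      have eq : |-x - q| = |x - -q| := by rw [← abs_neg]; congr 1; ring
      simp only [Set.mem_ofPred_eq, abs_neg, ep, eq]
      exact ⟨(add_comm _ _).trans_le h₁, (add_comm _ _).trans_le h₃⟩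
    · rintro ⟨x, y⟩ - ⟨x', y'⟩ - e
      simpa [and_comm] using e
end

section
/- Counting the overlap of two integer diamonds: let k and d be positive integers and let I(d) be the number of pairs (x,y) ∈ ℤ² with |x| + |y| ≤ k and |x − d| + |y| ≤ k. Then: (i) if d ≤ 2k and d is odd, I(d) = (2k − d + 1)²/2; (ii) if d ≤ 2k and d is even, I(d) = ((2k − d + 2)² + (2k − d)²)/4; (iii) if d ≥ 2k + 1, I(d) = 0. Equivalently, I(d) = (2k² + 2k + 1) − f_LB-D(d) for every positive integer d, where f_LB-D(d) = d(2k+1−d/2) + 1/2 for odd d ≤ 2k, f_LB-D(d) = d(2k+1−d/2) for even d ≤ 2k, and f_LB-D(d) = 2k² + 2k + 1 for d ≥ 2k+1. -/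
/-!
For a fixed second coordinate `y`, the overlap of the two diamonds is the integer interval
`d - k + |y| ≤ x ≤ k - |y|`. Write `2 * k + 1 = d + 2 * n + e` with `e ∈ {0, 1}`. If `|y| ≤ n`,
this interval has `2 * n + e - 2 * |y|` points, and otherwise it is empty. Summing over
`-n ≤ y ≤ n`, where `∑ |y| = n * (n + 1)`, gives `2 * n ^ 2 + e * (2 * n + 1)` points
(`ncard_diamond_inter`). The odd and even formulas are the cases `e = 0` and `e = 1`. For
`d ≥ 2 * k + 1` the triangle inequality makes the overlap empty.
-/

/-- The values of `f_LB-D` at natural number arguments: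
`d(2k+1−d/2) + 1/2` for odd `d ≤ 2k`, `d(2k+1−d/2)` for even `d ≤ 2k`,
and `2k² + 2k + 1` for `d ≥ 2k+1`. -/
noncomputable def fLBDnat (k d : ℕ) : ℝ :=
  if 2 * k + 1 ≤ d then 2 * (k : ℝ) ^ 2 + 2 * (k : ℝ) + 1
  else if Odd d then (d : ℝ) * (2 * (k : ℝ) + 1 - (d : ℝ) / 2) + 1 / 2
  else (d : ℝ) * (2 * (k : ℝ) + 1 - (d : ℝ) / 2)

theorem sum_abs_Icc (n : ℕ) :
    ∑ y ∈ Finset.Icc (-(n : ℤ)) n, |y| = (n : ℤ) * (n + 1) := by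
  induction n with
  | zero => simp
  | succ n ih =>
    have h : Finset.Icc (-((n + 1 : ℕ) : ℤ)) ((n + 1 : ℕ) : ℤ)
        = insert (-((n : ℤ) + 1)) (insert ((n : ℤ) + 1) (Finset.Icc (-(n : ℤ)) n)) := by
      ext y
      simp only [Finset.mem_Icc, Finset.mem_insert]
      omega
    rw [h, Finset.sum_insert (by simp; omega), Finset.sum_insert (by simp), ih, abs_neg,
      abs_of_nonneg (by omega : (0 : ℤ) ≤ (n : ℤ) + 1)]
    push_cast
    ring

/-- The number of points in the overlap, for both parities of `d ≤ 2 * k + 1` at once: `e = 0` when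
`d` is odd and `e = 1` when `d` is even. -/
theorem ncard_diamond_inter (k d n e : ℕ) (he : e ≤ 1) (h : 2 * k + 1 = d + 2 * n + e) :
    (Set.ncard {z : ℤ × ℤ |
      |z.1| + |z.2| ≤ (k : ℤ) ∧ |z.1 - (d : ℤ)| + |z.2| ≤ (k : ℤ)} : ℤ)
      = 2 * (n : ℤ) ^ 2 + e * (2 * n + 1) := by
  have hS : {z : ℤ × ℤ | |z.1| + |z.2| ≤ (k : ℤ) ∧ |z.1 - (d : ℤ)| + |z.2| ≤ (k : ℤ)}
      = (fun p : (_ : ℤ) × ℤ => (p.2, p.1)) '' (((Finset.Icc (-(n : ℤ)) n).sigma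
          fun y => Finset.Icc ((d : ℤ) - k + |y|) (k - |y|) : Finset ((_ : ℤ) × ℤ)) :
            Set ((_ : ℤ) × ℤ)) := by
    ext ⟨x, y⟩
    simp only [Set.mem_ofPred_eq, Set.mem_image, Finset.mem_coe, Finset.mem_sigma, Finset.mem_Icc,
      Prod.mk.injEq]
    constructor
    · intro hxy
      refine ⟨⟨y, x⟩, ?_, rfl, rfl⟩
      simp only [abs_eq_max_neg] at hxy ⊢
      omega
    · rintro ⟨⟨y', x'⟩, hp, rfl, rfl⟩
      simp only [abs_eq_max_neg] at hp ⊢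
      omega
  have hinj : Function.Injective (fun p : (_ : ℤ) × ℤ => (p.2, p.1)) := by
    rintro ⟨a, b⟩ ⟨a', b'⟩ hab
    simp only [Prod.mk.injEq] at hab
    obtain ⟨rfl, rfl⟩ := hab
    rfl
  rw [hS, Set.ncard_image_of_injective _ hinj, Set.ncard_coe_finset, Finset.card_sigma]
  push_cast
  -- For `e = 0` and `|y| = n` the interval is empty and its formal length is exactly `0`,
  -- so no truncation occurs on the range `|y| ≤ n`.
  have hterm : ∀ y ∈ Finset.Icc (-(n : ℤ)) n,
      ((Finset.Icc ((d : ℤ) - k + |y|) (k - |y|)).card : ℤ) = (2 * n + e) - 2 * |y| := by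
    intro y hy
    rw [Finset.mem_Icc] at hy
    rw [Int.card_Icc, abs_eq_max_neg]
    omega
  rw [Finset.sum_congr rfl hterm, Finset.sum_sub_distrib, ← Finset.mul_sum, sum_abs_Icc,
    Finset.sum_const, Int.card_Icc, nsmul_eq_mul,
    show ((((n : ℤ) + 1 - -(n : ℤ)).toNat : ℕ) : ℤ) = 2 * n + 1 by omega]
  ring

theorem stmt_17 (k d : ℕ) (hk : 0 < k) (hd : 0 < d)
    (I : ℕ)
    (hI : I = Set.ncard {z : ℤ × ℤ |
      |z.1| + |z.2| ≤ (k : ℤ) ∧ |z.1 - (d : ℤ)| + |z.2| ≤ (k : ℤ)}) :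
    (d ≤ 2 * k → Odd d → (I : ℝ) = (2 * (k : ℝ) - (d : ℝ) + 1) ^ 2 / 2) ∧
    (d ≤ 2 * k → Even d →
      (I : ℝ) = ((2 * (k : ℝ) - (d : ℝ) + 2) ^ 2 + (2 * (k : ℝ) - (d : ℝ)) ^ 2) / 4) ∧
    (2 * k + 1 ≤ d → I = 0) ∧
    (I : ℝ) = (2 * (k : ℝ) ^ 2 + 2 * (k : ℝ) + 1) - fLBDnat k d := by
  have key : ∀ n e : ℕ, e ≤ 1 → 2 * k + 1 = d + 2 * n + e →
      (I : ℝ) = 2 * (n : ℝ) ^ 2 + e * (2 * n + 1) ∧ (d : ℝ) = 2 * k + 1 - 2 * n - e := by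
    intro n e he h
    have h1 := ncard_diamond_inter k d n e he h
    rw [← hI] at h1
    have h2 : (2 * k + 1 : ℝ) = d + 2 * n + e := by exact_mod_cast h
    exact ⟨by exact_mod_cast h1, by linarith⟩
  have hodd : d ≤ 2 * k → Odd d → (I : ℝ) = (2 * (k : ℝ) - (d : ℝ) + 1) ^ 2 / 2 := by
    rintro hle ⟨m, hm⟩
    obtain ⟨h1, h2⟩ := key (k - m) 0 (by omega) (by omega)
    rw [h1, h2]
    push_cast
    ring
  have heven : d ≤ 2 * k → Even d →
      (I : ℝ) = ((2 * (k : ℝ) - (d : ℝ) + 2) ^ 2 + (2 * (k : ℝ) - (d : ℝ)) ^ 2) / 4 := by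
    rintro hle ⟨m, hm⟩
    obtain ⟨h1, h2⟩ := key (k - m) 1 (by omega) (by omega)
    rw [h1, h2]
    push_cast
    ring
  have hzero : 2 * k + 1 ≤ d → I = 0 := by
    intro hle
    rw [hI]
    convert Set.ncard_empty (ℤ × ℤ)
    ext ⟨x, y⟩
    simp only [Set.mem_ofPred_eq, Set.mem_empty_iff_false, iff_false, abs_eq_max_neg]
    omega
  refine ⟨hodd, heven, hzero, ?_⟩
  unfold fLBDnat
  split_ifs with hbig hpar
  · rw [hzero hbig]
    simp
  · rw [hodd (by omega) hpar]
    ring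
  · rw [heven (by omega) (Nat.not_odd_iff_even.mp hpar)]
    ring
end

section
/- Tessellation of ℤ² by l1 balls: let k be a positive integer and let A = {(a,b) ∈ ℤ² : (2k² + 2k + 1) divides k·a + (k+1)·b}. Then for every z ∈ ℤ² there exists exactly one point w ∈ A with dist₁(z, w) ≤ k; that is, the sets of integer points {z ∈ ℤ² : dist₁(z,(a,b)) ≤ k} for (a,b) ∈ A are pairwise disjoint and their union is all of ℤ². -/
/-!
Write `N = 2k² + 2k + 1` and `φ(a, b) = k a + (k + 1) b`, so that `A` is the kernel of `φ` modulo `N`.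
The claim is that `φ` maps the `l1` ball of radius `k` bijectively onto the residues modulo `N`.
In the coordinates `s = a + b`, `t = a - b`, the ball of radius `k` is `|s| ≤ k`, `|t| ≤ k` with
`s ≡ t (mod 2)`, and `2 φ(a, b) = (2k + 1) s - t`.

* Surjectivity (`exists_small_repr`): every `2r` with `|r| ≤ k² + k` can be divided by `2k + 1` with
  a balanced remainder `-t`, `|t| ≤ k`; the size of `r` forces the quotient `s` to satisfy `|s| ≤ k`,
  and `s`, `t` have the same parity because `2r` is even.
* Injectivity (`eq_zero_of_dvd_of_small`): a difference `(p, q)` of two points of the ball has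
  `|p| + |q| ≤ 2k`, hence `|φ(p, q)| ≤ 2k(k + 1) < N`. If `N ∣ φ(p, q)` then `φ(p, q) = 0`, that is
  `(2k + 1) s = t` with `|t| ≤ 2k`, so `s = t = 0`.
-/

/-- l1 distance on ℤ². -/
def distZ (p q : ℤ × ℤ) : ℤ := |p.1 - q.1| + |p.2 - q.2|

/-- Every integer `r` in the balanced residue range modulo `2k² + 2k + 1` is the value of
`k u + (k + 1) v` at some point `(u, v)` of the `l1` ball of radius `k`. -/
lemma exists_small_repr (k r : ℤ) (hk : 0 < k) (h1 : -(k ^ 2 + k) ≤ r) (h2 : r ≤ k ^ 2 + k) :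
    ∃ u v : ℤ, |u| + |v| ≤ k ∧ k * u + (k + 1) * v = r := by
  -- the quotient of `2r` by `2k + 1`, rounded to the nearest integer
  obtain ⟨s, hs⟩ : ∃ s, s = (2 * r + k) / (2 * k + 1) := ⟨_, rfl⟩
  have e := Int.mul_ediv_add_emod (2 * r + k) (2 * k + 1)
  have l := Int.emod_nonneg (2 * r + k) (b := 2 * k + 1) (by omega)
  have g := Int.emod_lt_of_pos (2 * r + k) (b := 2 * k + 1) (by omega)
  rw [← hs] at e
  obtain ⟨t, ht⟩ : ∃ t, t = (2 * k + 1) * s - 2 * r := ⟨_, rfl⟩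
  have t1 : t ≤ k := by linarith
  have t2 : -k ≤ t := by linarith
  have s1 : s ≤ k := by
    by_contra! h
    nlinarith
  have s2 : -k ≤ s := by
    by_contra! h
    nlinarith
  -- `s` and `t` have the same parity, so `(s - t) / 2` is an integer, namely `r - k s`
  refine ⟨s - (r - k * s), r - k * s, ?_, by ring⟩
  have hv : s - t = 2 * (r - k * s) := by rw [ht]; ring
  generalize r - k * s = v at *
  rcases abs_cases (s - v) with ⟨h, _⟩ | ⟨h, _⟩ <;> rcases abs_cases v with ⟨h', _⟩ | ⟨h', _⟩ <;>
    rw [h, h'] <;> omega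

/-- A nonzero vector of the lattice `A` has `l1` norm at least `2k + 1`. -/
lemma eq_zero_of_dvd_of_small (k p q : ℤ) (hk : 0 < k) (h : |p| + |q| ≤ 2 * k)
    (hd : 2 * k ^ 2 + 2 * k + 1 ∣ k * p + (k + 1) * q) : p = 0 ∧ q = 0 := by
  have hz : k * p + (k + 1) * q = 0 := by
    apply Int.eq_zero_of_abs_lt_dvd hd
    calc |k * p + (k + 1) * q| ≤ |k * p| + |(k + 1) * q| := abs_add_le _ _
      _ = k * |p| + (k + 1) * |q| := by
        rw [abs_mul, abs_mul, abs_of_pos hk, abs_of_pos (by omega : 0 < k + 1)]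
      _ < _ := by nlinarith [abs_nonneg p, abs_nonneg q]
  have hst : (2 * k + 1) * (p + q) = p - q := by linear_combination 2 * hz
  have b : |p - q| ≤ 2 * k := (abs_sub p q).trans h
  have hs : p + q = 0 := by
    have h0 := Int.eq_zero_of_abs_lt_dvd (m := 2 * k + 1) (x := p - q) ⟨_, hst.symm⟩ (by omega)
    rw [h0] at hst
    exact (mul_eq_zero.mp hst).resolve_left (by omega)
  rw [hs] at hst
  constructor <;> omega

theorem stmt_18 (k : ℕ) (hk : 0 < k)
    (A : Set (ℤ × ℤ))
    (hA : A = {w : ℤ × ℤ | ((2 * k ^ 2 + 2 * k + 1 : ℕ) : ℤ) ∣ (k : ℤ) * w.1 + ((k : ℤ) + 1) * w.2}) :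
    ∀ z : ℤ × ℤ, ∃! w : ℤ × ℤ, w ∈ A ∧ distZ z w ≤ (k : ℤ) := by
  subst hA
  have hk' : (0 : ℤ) < k := by exact_mod_cast hk
  push_cast
  generalize (k : ℤ) = K at *
  rintro ⟨x, y⟩
  have hN : 0 < 2 * K ^ 2 + 2 * K + 1 := by positivity
  -- the representative of `φ(x, y)` modulo `N` in the range `[-(K² + K), K² + K]`
  obtain ⟨m, hm⟩ : ∃ m, m = (K * x + (K + 1) * y + (K ^ 2 + K)) / (2 * K ^ 2 + 2 * K + 1) := ⟨_, rfl⟩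
  have e := Int.mul_ediv_add_emod (K * x + (K + 1) * y + (K ^ 2 + K)) (2 * K ^ 2 + 2 * K + 1)
  have l := Int.emod_nonneg (K * x + (K + 1) * y + (K ^ 2 + K)) hN.ne'
  have g := Int.emod_lt_of_pos (K * x + (K + 1) * y + (K ^ 2 + K)) hN
  rw [← hm] at e
  obtain ⟨u, v, huv, hr⟩ := exists_small_repr K
    (K * x + (K + 1) * y - (2 * K ^ 2 + 2 * K + 1) * m) hk' (by linarith) (by linarith)
  refine ⟨(x - u, y - v), ⟨⟨m, ?_⟩, ?_⟩, ?_⟩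
  · linear_combination -hr
  · simpa [distZ] using huv
  · rintro ⟨a, b⟩ ⟨hab, hd⟩
    simp only [distZ, Set.mem_ofPred_eq] at hab hd
    have hw : 2 * K ^ 2 + 2 * K + 1 ∣ K * (x - u) + (K + 1) * (y - v) :=
      ⟨m, by linear_combination -hr⟩
    have h1 : |u - (x - a)| ≤ |u| + |x - a| := abs_sub _ _
    have h2 : |v - (y - b)| ≤ |v| + |y - b| := abs_sub _ _
    obtain ⟨hp, hq⟩ := eq_zero_of_dvd_of_small K (u - (x - a)) (v - (y - b)) hk' (by linarith) (by
      have h3 := dvd_sub hab hw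
      have h4 : K * (u - (x - a)) + (K + 1) * (v - (y - b)) =
          K * a + (K + 1) * b - (K * (x - u) + (K + 1) * (y - v)) := by ring
      rwa [h4])
    ext <;> simp only <;> omega
end
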